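/- arXiv:1408.5537 — 8 statements merged into one kernel-verified Lean document; each statement's English description precedes it below -/
import Mathlib

section
/- Let b ≥ 0, γ = 1 + 16b/3, and let ω = (ω₀, ω₁) ∈ ℝ² satisfy ω₁² < 4ω₀. Then the positive function ˜φ_ω(x) = (2(4ω₀ − ω₁²) / (−ω₁ + √(ω₁² + γ(4ω₀ − ω₁²)) · cosh(√(4ω₀ − ω₁²) · x)))^{1/2} satisfies the ordinary differential equation −φ''(x) + ((4ω₀ − ω₁²)/4)·φ(x) + (ω₁/2)·φ(x)³ − (3γ/16)·φ(x)⁵ = 0 for all x ∈ ℝ. -/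
/-!
Write `c = 4ω₀ - ω₁²`, `k = √c`, `s = √(ω₁² + γc)` and `D x = -ω₁ + s cosh (k x)`, so that
`φ = √(2c / D)`. Since `γ ≥ 1` and `c > 0`, we have `s > |ω₁|` and hence `D > 0`; everything is
smooth and `φ' = -φ D' / (2D)`. Differentiating once more, `φ'' = φ (3 D'² - 2 D D'') / (4 D²)`.
The identities `D'' = c (D + ω₁)` and `D'² = c (D² + 2ω₁ D - γc)` (the latter from
`cosh² - sinh² = 1`) turn this into `φ'' = φ (c/4 + ω₁ c / D - 3γc² / (4D²))`, which is the
equation because `φ² = 2c / D`.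
-/

open MeasureTheory

noncomputable section

/-- γ = 1 + 16b/3 -/
def gam (b : ℝ) : ℝ := 1 + 16 * b / 3

/-- The real-valued profile ˜φ_ω. -/
def phit (b ω₀ ω₁ x : ℝ) : ℝ :=
  Real.sqrt (2 * (4 * ω₀ - ω₁ ^ 2) /
    (-ω₁ + Real.sqrt (ω₁ ^ 2 + gam b * (4 * ω₀ - ω₁ ^ 2)) *
      Real.cosh (Real.sqrt (4 * ω₀ - ω₁ ^ 2) * x)))

/-- The complex-valued solitary wave profile φ_ω. -/
def phi (b ω₀ ω₁ : ℝ) (x : ℝ) : ℂ :=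
  (phit b ω₀ ω₁ x : ℂ) *
    Complex.exp (Complex.I * (ω₁ / 2) * x -
      (Complex.I / 4) * ((∫ η in Set.Iic x, (phit b ω₀ ω₁ η) ^ 2) : ℝ))

/-- Q₀(v) = (1/2)∫|v|². -/
def Q0 (v : ℝ → ℂ) : ℝ := (1 / 2) * ∫ x : ℝ, ‖v x‖ ^ 2

/-- Q₁(v) = (1/2) Re ∫ i v' conj v. -/
def Q1 (v : ℝ → ℂ) : ℝ :=
  (1 / 2) * (∫ x : ℝ, Complex.I * deriv v x * (starRingEnd ℂ) (v x)).re

/-- P(v) = Re ∫ i |v|² v' conj v. -/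
def Pfun (v : ℝ → ℂ) : ℝ :=
  (∫ x : ℝ, Complex.I * (‖v x‖ : ℂ) ^ 2 * deriv v x * (starRingEnd ℂ) (v x)).re

/-- The energy E. -/
def Efun (b : ℝ) (v : ℝ → ℂ) : ℝ :=
  (1 / 2) * (∫ x : ℝ, ‖deriv v x‖ ^ 2) - (1 / 4) * Pfun v -
    (b / 6) * ∫ x : ℝ, ‖v x‖ ^ 6

/-- L_ω(v). -/
def Lfun (ω₀ ω₁ : ℝ) (v : ℝ → ℂ) : ℝ :=
  (∫ x : ℝ, ‖deriv v x‖ ^ 2) + ω₀ * (∫ x : ℝ, ‖v x‖ ^ 2) +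
    ω₁ * (∫ x : ℝ, Complex.I * deriv v x * (starRingEnd ℂ) (v x)).re

/-- The action S_ω. -/
def Sfun (b ω₀ ω₁ : ℝ) (v : ℝ → ℂ) : ℝ :=
  (1 / 2) * Lfun ω₀ ω₁ v - (1 / 4) * Pfun v - (b / 6) * ∫ x : ℝ, ‖v x‖ ^ 6

/-- The Nehari functional K_ω. -/
def Kfun (b ω₀ ω₁ : ℝ) (v : ℝ → ℂ) : ℝ :=
  Lfun ω₀ ω₁ v - Pfun v - b * ∫ x : ℝ, ‖v x‖ ^ 6

/-- v ∈ H¹(ℝ): v differentiable with v and v' square-integrable. -/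
def H1 (v : ℝ → ℂ) : Prop :=
  Differentiable ℝ v ∧ Integrable (fun x : ℝ => ‖v x‖ ^ 2) ∧
    Integrable (fun x : ℝ => ‖deriv v x‖ ^ 2)

/-- The function g from Remark 1. -/
def gfun (b ξ : ℝ) : ℝ :=
  (2 * (gam b - 1) / ξ) * Real.arctan ((1 + Real.sqrt (1 + ξ ^ 2)) / ξ)


/-- The logarithmic derivative of `√(a / D)` is minus half that of `D`, where `a` and `D` are
positive. -/
lemma hasDerivAt_sqrt_const_div {a d : ℝ} (ha : 0 < a) {D : ℝ → ℝ} {x : ℝ}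
    (hpos : 0 < D x) (hD : HasDerivAt D d x) :
    HasDerivAt (fun y => Real.sqrt (a / D y)) (-(Real.sqrt (a / D x) * d / (2 * D x))) x := by
  have hu : 0 < a / D x := div_pos ha hpos
  have h := ((hasDerivAt_const x a).div hD hpos.ne').sqrt hu.ne'
  refine h.congr_deriv ?_
  have hs : 0 < Real.sqrt (a / D x) := Real.sqrt_pos.2 hu
  have hsq : Real.sqrt (a / D x) ^ 2 * D x = a := by
    rw [Real.sq_sqrt hu.le]; field_simp
  simp only [Pi.div_apply]
  generalize Real.sqrt (a / D x) = r at hs hsq ⊢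
  field_simp
  linear_combination d * hsq

theorem stmt0 (b : ℝ) (hb : 0 ≤ b) (ω₀ ω₁ : ℝ) (hΩ : ω₁ ^ 2 < 4 * ω₀) (x : ℝ) :
    -(deriv (deriv (phit b ω₀ ω₁)) x) + ((4 * ω₀ - ω₁ ^ 2) / 4) * phit b ω₀ ω₁ x +
      (ω₁ / 2) * phit b ω₀ ω₁ x ^ 3 - (3 * gam b / 16) * phit b ω₀ ω₁ x ^ 5 = 0 := by
  have hc : 0 < 4 * ω₀ - ω₁ ^ 2 := by linarith
  have hg : 1 ≤ gam b := by unfold gam; linarith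
  set c := 4 * ω₀ - ω₁ ^ 2 with hcdef
  set g := gam b with hgdef
  set k := Real.sqrt c with hk
  set s := Real.sqrt (ω₁ ^ 2 + g * c) with hs
  have hk2 : k ^ 2 = c := Real.sq_sqrt hc.le
  have hgc : 0 < g * c := by positivity
  have hs2 : s ^ 2 = ω₁ ^ 2 + g * c := Real.sq_sqrt (by positivity)
  have hsω : ω₁ < s := by
    apply lt_of_le_of_lt (le_abs_self ω₁)
    rw [hs, ← Real.sqrt_sq_eq_abs]
    exact Real.sqrt_lt_sqrt (sq_nonneg _) (by linarith)
  have hs0 : 0 ≤ s := Real.sqrt_nonneg _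
  set D : ℝ → ℝ := fun y => -ω₁ + s * Real.cosh (k * y) with hDdef
  have hDpos : ∀ y, 0 < D y := fun y => by
    have := mul_le_mul_of_nonneg_left (Real.one_le_cosh (k * y)) hs0
    simp only [hDdef]; linarith
  have hlin : ∀ y, HasDerivAt (fun z : ℝ => k * z) k y := fun y => by
    simpa using (hasDerivAt_id y).const_mul k
  have hD1 : ∀ y, HasDerivAt D (s * (Real.sinh (k * y) * k)) y := fun y =>
    ((hlin y).cosh.const_mul s).const_add (-ω₁)
  have hD2 : ∀ y, HasDerivAt (fun z => s * (Real.sinh (k * z) * k))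
      (s * (Real.cosh (k * y) * k * k)) y := fun y =>
    ((hlin y).sinh.mul_const k).const_mul s
  have hφ : phit b ω₀ ω₁ = fun y => Real.sqrt (2 * c / D y) := rfl
  have hφ1 : ∀ y, HasDerivAt (phit b ω₀ ω₁)
      (-(phit b ω₀ ω₁ y * (s * (Real.sinh (k * y) * k)) / (2 * D y))) y := fun y =>
    hasDerivAt_sqrt_const_div (by positivity) (hDpos y) (hD1 y)
  have hφ2 := ((((hφ1 x).mul (hD2 x)).div ((hD1 x).const_mul 2)
    (mul_pos two_pos (hDpos x)).ne').neg).deriv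
  have hderiv : deriv (phit b ω₀ ω₁) =
      -((phit b ω₀ ω₁ * fun z => s * (Real.sinh (k * z) * k)) / fun z => 2 * D z) :=
    funext fun y => (hφ1 y).deriv
  rw [hderiv, hφ2]
  have hsq : phit b ω₀ ω₁ x ^ 2 = 2 * c / D x := by
    rw [hφ]; exact Real.sq_sqrt (div_pos (by positivity) (hDpos x)).le
  simp only [Pi.mul_apply]
  have h3 : phit b ω₀ ω₁ x ^ 3 = phit b ω₀ ω₁ x * (2 * c / D x) := by rw [← hsq]; ring
  have h5 : phit b ω₀ ω₁ x ^ 5 = phit b ω₀ ω₁ x * (2 * c / D x) ^ 2 := by rw [← hsq]; ring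
  rw [h3, h5]
  have hd2 : s * (Real.cosh (k * x) * k * k) = c * (D x + ω₁) := by
    simp only [hDdef]; rw [← hk2]; ring
  have hd1 : (s * (Real.sinh (k * x) * k)) ^ 2 = c * (D x ^ 2 + 2 * ω₁ * D x - g * c) := by
    have hcs := Real.cosh_sq (k * x)
    simp only [hDdef]
    linear_combination s ^ 2 * Real.sinh (k * x) ^ 2 * hk2 - c * s ^ 2 * hcs - c * hs2
  have hDx := (hDpos x).ne'
  rw [hd2]
  generalize s * (Real.sinh (k * x) * k) = d at hd1 ⊢
  generalize D x = δ at hd1 hDx ⊢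
  generalize phit b ω₀ ω₁ x = p
  field_simp
  ring_nf
  rw [hd1]
  ring

end
end

section
/- Let b ≥ 0, γ = 1 + 16b/3, and let ω = (ω₀, ω₁) ∈ ℝ² satisfy ω₁² < 4ω₀. Then the complex-valued function φ_ω(x) = ˜φ_ω(x)·exp(i(ω₁/2)x − (i/4)∫_{−∞}^x ˜φ_ω(η)² dη) satisfies the ordinary differential equation −φ''(x) + ω₀·φ(x) + ω₁·i·φ'(x) − i·|φ(x)|²·φ'(x) − b·|φ(x)|⁴·φ(x) = 0 for all x ∈ ℝ. -/
/-!
Write `φ = ρ e^{iθ}` with `ρ = phit` and `θ' = ω₁/2 - ρ²/4`. With this phase the imaginary part of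
the equation cancels identically, and the real part becomes
`ρ'' = (ω₀ - ω₁²/4) ρ + (ω₁/2) ρ³ - (3γ/16) ρ⁵`.
Since `ρ² = 2D/w` with `D = 4ω₀ - ω₁²`, `w = -ω₁ + s cosh(√D x)` and `s² = ω₁² + γD`, the real
equation follows from `w'' = D (w + ω₁)` and `w'² = D ((w + ω₁)² - s²)`.
As `γ > 0` gives `s > |ω₁|`, the function `w` is positive, so the square root in `ρ` is smooth; the
bound `w ≥ (s - |ω₁|) cosh(√D x)` makes `ρ²` integrable on half-lines, so that the derivative of the
phase is as claimed.
-/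

open MeasureTheory

noncomputable section

/-- The denominator in `phit`. -/
def den (b ω₀ ω₁ x : ℝ) : ℝ :=
  -ω₁ + Real.sqrt (ω₁ ^ 2 + gam b * (4 * ω₀ - ω₁ ^ 2)) *
      Real.cosh (Real.sqrt (4 * ω₀ - ω₁ ^ 2) * x)

/-- The derivative of `den` in `x`. -/
def den' (b ω₀ ω₁ x : ℝ) : ℝ :=
  Real.sqrt (ω₁ ^ 2 + gam b * (4 * ω₀ - ω₁ ^ 2)) *
    (Real.sinh (Real.sqrt (4 * ω₀ - ω₁ ^ 2) * x) * Real.sqrt (4 * ω₀ - ω₁ ^ 2))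

lemma gam_pos {b : ℝ} (hb : 0 ≤ b) : 0 < gam b := by
  unfold gam; positivity

section

variable {b ω₀ ω₁ : ℝ}

lemma abs_lt_sqrt (hb : 0 ≤ b) (hΩ : ω₁ ^ 2 < 4 * ω₀) :
    |ω₁| < Real.sqrt (ω₁ ^ 2 + gam b * (4 * ω₀ - ω₁ ^ 2)) := by
  apply Real.lt_sqrt_of_sq_lt
  rw [sq_abs]
  have := mul_pos (gam_pos hb) (sub_pos.2 hΩ)
  linarith

lemma den_lower (x : ℝ) :
    (Real.sqrt (ω₁ ^ 2 + gam b * (4 * ω₀ - ω₁ ^ 2)) - |ω₁|) *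
      Real.cosh (Real.sqrt (4 * ω₀ - ω₁ ^ 2) * x) ≤ den b ω₀ ω₁ x := by
  unfold den
  have h1 := Real.one_le_cosh (Real.sqrt (4 * ω₀ - ω₁ ^ 2) * x)
  nlinarith [abs_nonneg ω₁, le_abs_self ω₁]

lemma den_pos (hb : 0 ≤ b) (hΩ : ω₁ ^ 2 < 4 * ω₀) (x : ℝ) : 0 < den b ω₀ ω₁ x :=
  lt_of_lt_of_le (mul_pos (sub_pos.2 (abs_lt_sqrt hb hΩ)) (Real.cosh_pos _)) (den_lower x)

lemma hasDerivAt_den (x : ℝ) : HasDerivAt (den b ω₀ ω₁) (den' b ω₀ ω₁ x) x := by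
  have h : HasDerivAt (fun x : ℝ => Real.sqrt (4 * ω₀ - ω₁ ^ 2) * x)
      (Real.sqrt (4 * ω₀ - ω₁ ^ 2)) x := by
    simpa using (hasDerivAt_id x).const_mul (Real.sqrt (4 * ω₀ - ω₁ ^ 2))
  exact (h.cosh.const_mul _).const_add _

lemma hasDerivAt_den' (hΩ : ω₁ ^ 2 < 4 * ω₀) (x : ℝ) :
    HasDerivAt (den' b ω₀ ω₁) ((4 * ω₀ - ω₁ ^ 2) * (den b ω₀ ω₁ x + ω₁)) x := by
  have h : HasDerivAt (fun x : ℝ => Real.sqrt (4 * ω₀ - ω₁ ^ 2) * x)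
      (Real.sqrt (4 * ω₀ - ω₁ ^ 2)) x := by
    simpa using (hasDerivAt_id x).const_mul (Real.sqrt (4 * ω₀ - ω₁ ^ 2))
  have h2 := (h.sinh.mul_const (Real.sqrt (4 * ω₀ - ω₁ ^ 2))).const_mul
    (Real.sqrt (ω₁ ^ 2 + gam b * (4 * ω₀ - ω₁ ^ 2)))
  refine h2.congr_deriv ?_
  have hk := Real.sq_sqrt (sub_pos.2 hΩ).le
  unfold den
  linear_combination Real.sqrt (ω₁ ^ 2 + gam b * (4 * ω₀ - ω₁ ^ 2)) *
      Real.cosh (Real.sqrt (4 * ω₀ - ω₁ ^ 2) * x) * hk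

lemma den'_sq (hb : 0 ≤ b) (hΩ : ω₁ ^ 2 < 4 * ω₀) (x : ℝ) :
    den' b ω₀ ω₁ x ^ 2 = (4 * ω₀ - ω₁ ^ 2) * ((den b ω₀ ω₁ x + ω₁) ^ 2 -
      (ω₁ ^ 2 + gam b * (4 * ω₀ - ω₁ ^ 2))) := by
  have hD := sub_pos.2 hΩ
  have hk := Real.sq_sqrt hD.le
  have hs := Real.sq_sqrt (add_nonneg (sq_nonneg ω₁) (mul_pos (gam_pos hb) hD).le)
  have hc := Real.cosh_sq (Real.sqrt (4 * ω₀ - ω₁ ^ 2) * x)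
  unfold den den'
  generalize Real.sqrt (ω₁ ^ 2 + gam b * (4 * ω₀ - ω₁ ^ 2)) = s at *
  generalize Real.cosh (Real.sqrt (4 * ω₀ - ω₁ ^ 2) * x) = c at *
  generalize Real.sinh (Real.sqrt (4 * ω₀ - ω₁ ^ 2) * x) = t at *
  generalize Real.sqrt (4 * ω₀ - ω₁ ^ 2) = k at *
  linear_combination s ^ 2 * t ^ 2 * hk - (4 * ω₀ - ω₁ ^ 2) * s ^ 2 * hc
    - (4 * ω₀ - ω₁ ^ 2) * hs

lemma phit_eq (x : ℝ) :
    phit b ω₀ ω₁ x = Real.sqrt (2 * (4 * ω₀ - ω₁ ^ 2) / den b ω₀ ω₁ x) := rfl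

lemma phit_sq (hb : 0 ≤ b) (hΩ : ω₁ ^ 2 < 4 * ω₀) (x : ℝ) :
    phit b ω₀ ω₁ x ^ 2 = 2 * (4 * ω₀ - ω₁ ^ 2) / den b ω₀ ω₁ x := by
  rw [phit_eq, Real.sq_sqrt]
  exact div_nonneg (by linarith) (den_pos hb hΩ x).le

lemma hasDerivAt_phit (hb : 0 ≤ b) (hΩ : ω₁ ^ 2 < 4 * ω₀) (x : ℝ) :
    HasDerivAt (phit b ω₀ ω₁)
      (-(phit b ω₀ ω₁ x * den' b ω₀ ω₁ x / (2 * den b ω₀ ω₁ x))) x := by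
  have hw := den_pos hb hΩ x
  have hpos : 0 < 2 * (4 * ω₀ - ω₁ ^ 2) / den b ω₀ ω₁ x := div_pos (by linarith) hw
  have h := ((hasDerivAt_const x (2 * (4 * ω₀ - ω₁ ^ 2))).div
    (hasDerivAt_den (b := b) x) hw.ne').sqrt hpos.ne'
  refine h.congr_deriv ?_
  have hr : 0 < phit b ω₀ ω₁ x := Real.sqrt_pos.2 hpos
  have hsq := phit_sq hb hΩ x
  simp only [Pi.div_apply]
  rw [← phit_eq]
  rw [eq_div_iff hw.ne'] at hsq
  field_simp
  linear_combination den' b ω₀ ω₁ x * hsq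

/-- The second derivative of `phit`, given as the derivative of the expression for the first one
found in `hasDerivAt_phit`. -/
lemma hasDerivAt_phit' (hb : 0 ≤ b) (hΩ : ω₁ ^ 2 < 4 * ω₀) (x : ℝ) :
    HasDerivAt (fun x => -(phit b ω₀ ω₁ x * den' b ω₀ ω₁ x / (2 * den b ω₀ ω₁ x)))
      ((ω₀ - ω₁ ^ 2 / 4) * phit b ω₀ ω₁ x + ω₁ / 2 * phit b ω₀ ω₁ x ^ 3
        - 3 / 16 * gam b * phit b ω₀ ω₁ x ^ 5) x := by
  have hw := den_pos hb hΩ x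
  have h := (((hasDerivAt_phit hb hΩ x).mul (hasDerivAt_den' (b := b) hΩ x)).div
    ((hasDerivAt_den (b := b) x).const_mul 2) (by positivity)).neg
  refine h.congr_deriv ?_
  have hsq := phit_sq hb hΩ x
  have hd := den'_sq hb hΩ x
  have h3 : phit b ω₀ ω₁ x ^ 3 = phit b ω₀ ω₁ x * (2 * (4 * ω₀ - ω₁ ^ 2) / den b ω₀ ω₁ x) := by
    rw [← hsq]; ring
  have h5 : phit b ω₀ ω₁ x ^ 5 =
      phit b ω₀ ω₁ x * (2 * (4 * ω₀ - ω₁ ^ 2) / den b ω₀ ω₁ x) ^ 2 := by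
    rw [← hsq]; ring
  rw [h3, h5]
  simp only [Pi.mul_apply]
  generalize den b ω₀ ω₁ x = w at *
  generalize den' b ω₀ ω₁ x = w' at *
  generalize phit b ω₀ ω₁ x = r at *
  field_simp
  linear_combination 192 * r * hd

lemma continuous_phit (hb : 0 ≤ b) (hΩ : ω₁ ^ 2 < 4 * ω₀) : Continuous (phit b ω₀ ω₁) :=
  continuous_iff_continuousAt.2 fun x => (hasDerivAt_phit hb hΩ x).continuousAt

lemma integrableOn_phit_sq (hb : 0 ≤ b) (hΩ : ω₁ ^ 2 < 4 * ω₀) (x : ℝ) :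
    IntegrableOn (fun η => phit b ω₀ ω₁ η ^ 2) (Set.Iic x) := by
  have hD := sub_pos.2 hΩ
  have hk := Real.sqrt_pos.2 hD
  have hc := sub_pos.2 (abs_lt_sqrt hb hΩ)
  have hI := (integrableOn_exp_mul_Iic hk x).const_mul (2 * (4 * ω₀ - ω₁ ^ 2) /
    ((Real.sqrt (ω₁ ^ 2 + gam b * (4 * ω₀ - ω₁ ^ 2)) - |ω₁|) / 2))
  refine Integrable.mono' hI
    ((continuous_phit hb hΩ).pow 2).aestronglyMeasurable (Filter.Eventually.of_forall fun y => ?_)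
  rw [Real.norm_of_nonneg (sq_nonneg _), phit_sq hb hΩ]
  have hl := den_lower (b := b) (ω₀ := ω₀) (ω₁ := ω₁) y
  generalize Real.sqrt (ω₁ ^ 2 + gam b * (4 * ω₀ - ω₁ ^ 2)) - |ω₁| = c at *
  -- `cosh t ≥ e^{-t}/2` is the bound that decays at `-∞`.
  have hl2 : c / 2 * Real.exp (-(Real.sqrt (4 * ω₀ - ω₁ ^ 2) * y)) ≤ den b ω₀ ω₁ y := by
    refine le_trans ?_ hl
    rw [Real.cosh_eq]
    nlinarith [mul_pos hc (Real.exp_pos (Real.sqrt (4 * ω₀ - ω₁ ^ 2) * y))]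
  refine (div_le_div_of_nonneg_left (by linarith) (by positivity) hl2).trans (le_of_eq ?_)
  rw [Real.exp_neg]
  field_simp

lemma hasDerivAt_integral_phit_sq (hb : 0 ≤ b) (hΩ : ω₁ ^ 2 < 4 * ω₀) (x : ℝ) :
    HasDerivAt (fun x => ∫ η in Set.Iic x, phit b ω₀ ω₁ η ^ 2) (phit b ω₀ ω₁ x ^ 2) x := by
  have hcont := (continuous_phit hb hΩ).pow 2
  have h : (fun x => ∫ η in Set.Iic x, phit b ω₀ ω₁ η ^ 2) = fun x =>
      (∫ η in Set.Iic 0, phit b ω₀ ω₁ η ^ 2) + ∫ η in (0 : ℝ)..x, phit b ω₀ ω₁ η ^ 2 := by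
    funext y
    rw [← intervalIntegral.integral_Iic_sub_Iic (integrableOn_phit_sq hb hΩ 0)
      (integrableOn_phit_sq hb hΩ y)]
    ring
  rw [h]
  exact (hcont.integral_hasStrictDerivAt 0 x).hasDerivAt.const_add _

/-- The phase factor `e^{iθ}` of `phi`. -/
def phase (b ω₀ ω₁ x : ℝ) : ℂ :=
  Complex.exp (Complex.I * (ω₁ / 2) * x -
      (Complex.I / 4) * ((∫ η in Set.Iic x, (phit b ω₀ ω₁ η) ^ 2) : ℝ))

lemma phi_eq : phi b ω₀ ω₁ = fun x => (phit b ω₀ ω₁ x : ℂ) * phase b ω₀ ω₁ x := rfl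

lemma norm_phi (x : ℝ) : ‖phi b ω₀ ω₁ x‖ = phit b ω₀ ω₁ x := by
  have h : phase b ω₀ ω₁ x = Complex.exp
      (((ω₁ / 2 * x - 1 / 4 * ∫ η in Set.Iic x, (phit b ω₀ ω₁ η) ^ 2 : ℝ) : ℂ) * Complex.I) := by
    unfold phase
    congr 1
    push_cast
    ring
  rw [phi_eq]
  simp only [norm_mul]
  rw [h, Complex.norm_exp_ofReal_mul_I, Complex.norm_real, mul_one]
  exact Real.norm_of_nonneg (Real.sqrt_nonneg _)

lemma hasDerivAt_phase (hb : 0 ≤ b) (hΩ : ω₁ ^ 2 < 4 * ω₀) (x : ℝ) :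
    HasDerivAt (phase b ω₀ ω₁) (phase b ω₀ ω₁ x *
      (Complex.I * (ω₁ / 2 - (phit b ω₀ ω₁ x : ℂ) ^ 2 / 4))) x := by
  have h1 := (hasDerivAt_integral_phit_sq hb hΩ x).ofReal_comp.const_mul (Complex.I / 4)
  have h2 := (hasDerivAt_id x).ofReal_comp.const_mul (Complex.I * ((ω₁ : ℂ) / 2))
  refine (h2.sub h1).cexp.congr_deriv ?_
  simp only [phase, id, Pi.sub_apply]
  push_cast
  ring

end

theorem stmt1 (b : ℝ) (hb : 0 ≤ b) (ω₀ ω₁ : ℝ) (hΩ : ω₁ ^ 2 < 4 * ω₀) (x : ℝ) :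
    -(deriv (deriv (phi b ω₀ ω₁)) x) + (ω₀ : ℂ) * phi b ω₀ ω₁ x +
      (ω₁ : ℂ) * (Complex.I * deriv (phi b ω₀ ω₁) x) -
      Complex.I * (‖phi b ω₀ ω₁ x‖ : ℂ) ^ 2 * deriv (phi b ω₀ ω₁) x -
      (b : ℂ) * (‖phi b ω₀ ω₁ x‖ : ℂ) ^ 4 * phi b ω₀ ω₁ x = 0 := by
  rw [norm_phi]
  have hd1 := funext fun y =>
    ((hasDerivAt_phit hb hΩ y).ofReal_comp.mul (hasDerivAt_phase hb hΩ y)).deriv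
  change deriv (phi b ω₀ ω₁) = _ at hd1
  have hρ := (hasDerivAt_phit hb hΩ x).ofReal_comp
  have he := hasDerivAt_phase hb hΩ x
  have hρ2 := (hasDerivAt_phit' hb hΩ x).ofReal_comp
  have hθ := (((hρ.pow 2).div_const 4).const_sub ((ω₁ : ℂ) / 2)).const_mul Complex.I
  have hd2 := ((hρ2.mul he).add (hρ.mul (he.mul hθ))).deriv
  have hd2' := (congrArg (fun f : ℝ → ℂ => deriv f x) hd1).trans hd2
  rw [hd2', hd1]
  simp only [phi_eq, gam, Pi.mul_apply, Pi.pow_apply]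
  generalize -(phit b ω₀ ω₁ x * den' b ω₀ ω₁ x / (2 * den b ω₀ ω₁ x)) = r'
  push_cast
  generalize (phit b ω₀ ω₁ x : ℂ) = r
  generalize phase b ω₀ ω₁ x = e
  ring_nf
  simp only [Complex.I_sq]
  ring

end
end

section
/- Let b > 0, γ = 1 + 16b/3, and let ω = (ω₀, ω₁) ∈ Ω. Then Q₀(φ_ω) = (4/√γ)·arctan((ω₁ + √(ω₁² + γ(4ω₀ − ω₁²)))/√(γ(4ω₀ − ω₁²))). -/
/-!
Write `a = 4ω₀ - ω₁²`, `s = √a`, `A = √(ω₁² + γa)` and `c = √(γa)`, so that `A² = ω₁² + c²`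
and `A > |ω₁|`. The phase of `φ_ω` is real, hence `|φ_ω|² = ˜φ_ω²` and
`Q₀(φ_ω) = ∫ a / (-ω₁ + A cosh(sx)) dx`. The integrand is positive with the bounded antiderivative
`(2/√γ) arctan((A e^{sx} - ω₁)/c)` (`hasDerivAt_primitive`), so the integral converges and equals
`(2/√γ)(π/2 + arctan(ω₁/c))`. The half-angle identity
`2 arctan((ω₁ + A)/c) = π/2 + arctan(ω₁/c)` (`two_mul_arctan_half_angle`) gives the closed form.
-/

open MeasureTheory

noncomputable section

theorem norm_phi_sq (b ω₀ ω₁ x : ℝ) : ‖phi b ω₀ ω₁ x‖ ^ 2 = phit b ω₀ ω₁ x ^ 2 := by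
  have h : ∀ r : ℝ, Complex.I * (ω₁ / 2) * x - (Complex.I / 4) * (r : ℂ)
      = ((ω₁ / 2 * x - r / 4 : ℝ) : ℂ) * Complex.I := by
    intro r; push_cast; ring
  rw [phi, h, norm_mul, Complex.norm_exp_ofReal_mul_I, mul_one, Complex.norm_real,
    Real.norm_eq_abs, sq_abs]

/-- With `θ = arctan ((w + A) / c)`, the double-angle formulas give `tan (2θ - π/2) = w / c`. -/
theorem two_mul_arctan_half_angle {w A c : ℝ} (hc : 0 < c) (hA : A ^ 2 = w ^ 2 + c ^ 2)
    (hpos : 0 < w + A) :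
    2 * Real.arctan ((w + A) / c) = Real.pi / 2 + Real.arctan (w / c) := by
  set θ := Real.arctan ((w + A) / c) with hθ
  have h0 : 0 < θ := Real.arctan_pos.2 (by positivity)
  have h1 : θ < Real.pi / 2 := Real.arctan_lt_pi_div_two _
  have hcos : 0 < Real.cos θ := Real.cos_arctan_pos _
  have htan : Real.sin θ = (w + A) / c * Real.cos θ := by
    rw [← Real.tan_mul_cos hcos.ne', hθ, Real.tan_arctan]
  have hsc := Real.sin_sq_add_cos_sq θ
  have hsin : 0 < Real.sin θ := by rw [htan]; positivity
  have key : Real.tan (2 * θ - Real.pi / 2) = w / c := by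
    rw [Real.tan_eq_sin_div_cos, Real.sin_sub_pi_div_two, Real.cos_sub_pi_div_two,
      Real.sin_two_mul, Real.cos_two_mul', htan]
    field_simp
    linear_combination hA
  have := Real.arctan_tan (x := 2 * θ - Real.pi / 2) (by linarith) (by linarith)
  rw [key] at this
  linarith

theorem hasDerivAt_primitive {w A c s g : ℝ} (hc : 0 < c) (hA : A ^ 2 = w ^ 2 + c ^ 2)
    (hwA : |w| < A) (hg : 0 < g) (hs : c = g * s) (x : ℝ) :
    HasDerivAt (fun x => 2 / g * Real.arctan ((A * Real.exp (s * x) - w) / c))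
      (s ^ 2 / (-w + A * Real.cosh (s * x))) x := by
  have h1 : HasDerivAt (fun x => (A * Real.exp (s * x) - w) / c)
      (A * (Real.exp (s * x) * (s * 1)) / c) x :=
    (((((hasDerivAt_id x).const_mul s).exp).const_mul A).sub_const w).div_const c
  refine ((h1.arctan).const_mul (2 / g)).congr_deriv ?_
  have hD : 0 < -w + A * Real.cosh (s * x) := by
    have := Real.one_le_cosh (s * x)
    have := le_abs_self w
    nlinarith [abs_nonneg w]
  have hApos : 0 < A := (abs_nonneg w).trans_lt hwA
  have he := Real.exp_pos (s * x)
  have hcosh : Real.cosh (s * x) * (2 * Real.exp (s * x)) = Real.exp (s * x) ^ 2 + 1 := by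
    rw [Real.cosh_eq, Real.exp_neg]; field_simp
  set E := Real.exp (s * x)
  -- `c² + (A E - w)² = 2 A E (A cosh(s x) - w)`, because `w² + c² = A²`.
  have hden : 1 + ((A * E - w) / c) ^ 2 = 2 * A * E * (-w + A * Real.cosh (s * x)) / c ^ 2 := by
    field_simp
    linear_combination (-1) * hA - A ^ 2 * hcosh
  rw [hden]
  generalize -w + A * Real.cosh (s * x) = D at *
  field_simp
  rw [hs]
  ring

theorem tendsto_primitive_atTop {w A c s g : ℝ} (hc : 0 < c) (hA : 0 < A) (hs : 0 < s) :
    Filter.Tendsto (fun x => 2 / g * Real.arctan ((A * Real.exp (s * x) - w) / c))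
      Filter.atTop (nhds (2 / g * (Real.pi / 2))) := by
  have h1 : Filter.Tendsto (fun x => Real.exp (s * x)) Filter.atTop Filter.atTop :=
    Real.tendsto_exp_atTop.comp (Filter.tendsto_id.const_mul_atTop hs)
  have h2 := (Filter.tendsto_atTop_add_const_right _ (-w) (h1.const_mul_atTop hA)).atTop_div_const hc
  exact ((Real.tendsto_arctan_atTop.mono_right nhdsWithin_le_nhds).comp h2).const_mul _

theorem tendsto_primitive_atBot {w A c s g : ℝ} (hs : 0 < s) :
    Filter.Tendsto (fun x => 2 / g * Real.arctan ((A * Real.exp (s * x) - w) / c))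
      Filter.atBot (nhds (2 / g * Real.arctan (-w / c))) := by
  have h1 : Filter.Tendsto (fun x => Real.exp (s * x)) Filter.atBot (nhds 0) :=
    Real.tendsto_exp_atBot.comp (Filter.tendsto_id.const_mul_atBot hs)
  have h2 := ((h1.const_mul A).sub_const w).div_const c
  rw [mul_zero, zero_sub] at h2
  exact ((Real.continuous_arctan.tendsto _).comp h2).const_mul _

/-- A nonnegative derivative of a function with finite limits at `±∞` is integrable on `ℝ`. -/
theorem integrable_of_deriv_nonneg {f f' : ℝ → ℝ} {m n : ℝ}
    (hd : ∀ x, HasDerivAt f (f' x) x) (h0 : ∀ x, 0 ≤ f' x)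
    (hbot : Filter.Tendsto f Filter.atBot (nhds m))
    (htop : Filter.Tendsto f Filter.atTop (nhds n)) : Integrable f' := by
  have hR : IntegrableOn f' (Set.Ioi 0) :=
    integrableOn_Ioi_deriv_of_nonneg' (fun x _ => hd x) (fun x _ => h0 x) htop
  have hL : IntegrableOn f' (Set.Iic 0) := by
    have h := integrableOn_Ioi_deriv_of_nonneg' (a := 0) (g := fun x => - f (-x))
      (g' := fun x => f' (-x)) (l := -m)
      (fun x _ => (((hd (-x)).comp x (hasDerivAt_neg x)).neg).congr_deriv (by simp))
      (fun x _ => h0 _) (hbot.comp Filter.tendsto_neg_atTop_atBot).neg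
    rw [← integrableOn_Ici_iff_integrableOn_Ioi] at h
    have := h.comp_neg
    simpa using this
  rw [← integrableOn_univ, ← Set.Iic_union_Ioi (a := (0 : ℝ))]
  exact hL.union hR

theorem stmt2 (b : ℝ) (hb : 0 < b) (ω₀ ω₁ : ℝ) (hΩ : ω₁ ^ 2 < 4 * ω₀) :
    Q0 (phi b ω₀ ω₁) =
      (4 / Real.sqrt (gam b)) *
        Real.arctan ((ω₁ + Real.sqrt (ω₁ ^ 2 + gam b * (4 * ω₀ - ω₁ ^ 2))) /
          Real.sqrt (gam b * (4 * ω₀ - ω₁ ^ 2))) := by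
  have hγ : 0 < gam b := by unfold gam; positivity
  have ha : 0 < 4 * ω₀ - ω₁ ^ 2 := by linarith
  simp only [Q0, norm_phi_sq, phit]
  generalize gam b = γ at *
  generalize 4 * ω₀ - ω₁ ^ 2 = a at *
  have hs : 0 < Real.sqrt a := Real.sqrt_pos.2 ha
  have hg : 0 < Real.sqrt γ := Real.sqrt_pos.2 hγ
  have hc : 0 < Real.sqrt (γ * a) := Real.sqrt_pos.2 (mul_pos hγ ha)
  have hcs : Real.sqrt (γ * a) = Real.sqrt γ * Real.sqrt a := Real.sqrt_mul hγ.le a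
  have hA : Real.sqrt (ω₁ ^ 2 + γ * a) ^ 2 = ω₁ ^ 2 + Real.sqrt (γ * a) ^ 2 := by
    rw [Real.sq_sqrt (by positivity), Real.sq_sqrt (by positivity)]
  have hwA : |ω₁| < Real.sqrt (ω₁ ^ 2 + γ * a) := by
    rw [← Real.sqrt_sq_eq_abs]
    exact Real.sqrt_lt_sqrt (sq_nonneg _) (by nlinarith [mul_pos hγ ha])
  have hsa : Real.sqrt a ^ 2 = a := Real.sq_sqrt ha.le
  generalize Real.sqrt (ω₁ ^ 2 + γ * a) = A at *
  generalize Real.sqrt (γ * a) = c at *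
  generalize Real.sqrt γ = g at *
  generalize Real.sqrt a = s at *
  have hApos : 0 < A := (abs_nonneg _).trans_lt hwA
  have hD : ∀ x, 0 < -ω₁ + A * Real.cosh (s * x) := by
    intro x
    have := Real.one_le_cosh (s * x)
    have := le_abs_self ω₁
    nlinarith
  have hint : ∀ x, Real.sqrt (2 * a / (-ω₁ + A * Real.cosh (s * x))) ^ 2
      = 2 * (s ^ 2 / (-ω₁ + A * Real.cosh (s * x))) := by
    intro x
    have := hD x
    rw [Real.sq_sqrt (by positivity), hsa, mul_div_assoc]
  have hder := hasDerivAt_primitive hc hA hwA hg hcs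
  have hbot := tendsto_primitive_atBot (w := ω₁) (A := A) (c := c) (g := g) hs
  have htop := tendsto_primitive_atTop (w := ω₁) (g := g) hc hApos hs
  have hI := integrable_of_deriv_nonneg hder
    (fun x => div_nonneg (sq_nonneg s) (hD x).le) hbot htop
  simp_rw [hint]
  rw [integral_const_mul, integral_of_hasDerivAt_of_tendsto hder hI hbot htop, neg_div,
    Real.arctan_neg]
  have hhalf := two_mul_arctan_half_angle hc hA (by linarith [neg_abs_le ω₁])
  linear_combination (-2 / g) * hhalf

end
end

section
/- Let b > 0 and γ = 1 + 16b/3. The function g : (0, ∞) → ℝ defined by g(ξ) = (2(γ−1)/ξ)·arctan((1 + √(1 + ξ²))/ξ) is strictly decreasing on (0, ∞), takes values in (0, ∞), and maps (0, ∞) bijectively onto (0, ∞). -/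
/-!
The argument `(1 + √(1 + ξ²)) / ξ` of the arctangent is positive and strictly decreasing on
`(0, ∞)` (`garg_strictAnti`), so `g` is a product of two positive decreasing factors, hence
positive and strictly decreasing, and in particular injective.

For surjectivity, the argument is at least `1`, so the arctangent lies in `[π/4, π/2)`. With
`A = 2(γ - 1)` this gives `Aπ/(4ξ) ≤ g(ξ) ≤ Aπ/(2ξ)` (`le_gfun`, `gfun_le`). Given `c > 0`, these
bounds yield `g(Aπ/(4c)) ≥ c ≥ g(Aπ/(2c))`, and the intermediate value theorem applies.
-/

open MeasureTheory

noncomputable section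

lemma two_mul_gam_sub_one_pos {b : ℝ} (hb : 0 < b) : 0 < 2 * (gam b - 1) := by
  unfold gam
  linarith

lemma garg_strictAnti {x y : ℝ} (hx : 0 < x) (hxy : x < y) :
    (1 + Real.sqrt (1 + y ^ 2)) / y < (1 + Real.sqrt (1 + x ^ 2)) / x := by
  have hy : 0 < y := hx.trans hxy
  rw [div_lt_div_iff₀ hy hx]
  have h : Real.sqrt (1 + y ^ 2) * x ≤ Real.sqrt (1 + x ^ 2) * y := by
    -- After squaring, the inequality reduces to `x² ≤ y²`.
    apply le_of_sq_le_sq _ (by positivity)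
    rw [mul_pow, mul_pow, Real.sq_sqrt (by positivity), Real.sq_sqrt (by positivity)]
    nlinarith
  linarith

lemma one_le_garg {x : ℝ} (hx : 0 < x) : 1 ≤ (1 + Real.sqrt (1 + x ^ 2)) / x := by
  rw [le_div_iff₀ hx]
  have : x ≤ Real.sqrt (1 + x ^ 2) := Real.le_sqrt_of_sq_le (by linarith)
  linarith

lemma pi_div_four_le_arctan_garg {x : ℝ} (hx : 0 < x) :
    Real.pi / 4 ≤ Real.arctan ((1 + Real.sqrt (1 + x ^ 2)) / x) := by
  rw [← Real.arctan_one]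
  exact Real.arctan_mono (one_le_garg hx)

lemma le_gfun {b x : ℝ} (hb : 0 < b) (hx : 0 < x) :
    2 * (gam b - 1) / x * (Real.pi / 4) ≤ gfun b x :=
  mul_le_mul_of_nonneg_left (pi_div_four_le_arctan_garg hx)
    (div_pos (two_mul_gam_sub_one_pos hb) hx).le

lemma gfun_le {b x : ℝ} (hb : 0 < b) (hx : 0 < x) :
    gfun b x ≤ 2 * (gam b - 1) / x * (Real.pi / 2) :=
  mul_le_mul_of_nonneg_left (Real.arctan_lt_pi_div_two _).le
    (div_pos (two_mul_gam_sub_one_pos hb) hx).le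

lemma gfun_pos {b x : ℝ} (hb : 0 < b) (hx : 0 < x) : 0 < gfun b x :=
  lt_of_lt_of_le (mul_pos (div_pos (two_mul_gam_sub_one_pos hb) hx)
    (by have := Real.pi_pos; positivity)) (le_gfun hb hx)

lemma gfun_strictAntiOn {b : ℝ} (hb : 0 < b) : StrictAntiOn (gfun b) (Set.Ioi 0) := by
  intro x hx y hy hxy
  have hx : 0 < x := hx
  have hy : 0 < y := hy
  have hA := two_mul_gam_sub_one_pos hb
  exact mul_lt_mul'' (div_lt_div_of_pos_left hA hx hxy)
    (Real.arctan_strictMono (garg_strictAnti hx hxy)) (div_pos hA hy).le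
    ((by positivity : (0 : ℝ) ≤ Real.pi / 4).trans (pi_div_four_le_arctan_garg hy))

lemma gfun_continuousOn (b : ℝ) : ContinuousOn (gfun b) (Set.Ioi 0) := by
  have h0 : ∀ x ∈ Set.Ioi (0 : ℝ), x ≠ 0 := fun x hx => ne_of_gt hx
  unfold gfun
  refine (continuousOn_const.div continuousOn_id h0).mul
    (Real.continuous_arctan.comp_continuousOn (ContinuousOn.div ?_ continuousOn_id h0))
  fun_prop

lemma gfun_surjOn {b : ℝ} (hb : 0 < b) :
    Set.SurjOn (gfun b) (Set.Ioi 0) (Set.Ioi 0) := by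
  intro c hc
  have hc : 0 < c := hc
  have hA := two_mul_gam_sub_one_pos hb
  have hpi := Real.pi_pos
  have hl := le_gfun hb (x := 2 * (gam b - 1) * (Real.pi / 4) / c) (by positivity)
  have hu := gfun_le hb (x := 2 * (gam b - 1) * (Real.pi / 2) / c) (by positivity)
  have cancel : ∀ A p : ℝ, 0 < A → 0 < p → A / (A * p / c) * p = c := by
    intro A p hA hp
    field_simp
  rw [cancel _ _ hA (by positivity)] at hl hu
  have hle : 2 * (gam b - 1) * (Real.pi / 4) / c ≤ 2 * (gam b - 1) * (Real.pi / 2) / c := by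
    gcongr
    norm_num
  have hpos : 0 < 2 * (gam b - 1) * (Real.pi / 4) / c := by positivity
  have hsub : Set.Icc (2 * (gam b - 1) * (Real.pi / 4) / c)
      (2 * (gam b - 1) * (Real.pi / 2) / c) ⊆ Set.Ioi 0 :=
    fun x hx => hpos.trans_le hx.1
  obtain ⟨x, hx, hxc⟩ :=
    intermediate_value_Icc' hle ((gfun_continuousOn b).mono hsub) ⟨hu, hl⟩
  exact ⟨x, hsub hx, hxc⟩

theorem stmt5 (b : ℝ) (hb : 0 < b) :
    StrictAntiOn (gfun b) (Set.Ioi 0) ∧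
    (∀ ξ ∈ Set.Ioi (0 : ℝ), gfun b ξ ∈ Set.Ioi (0 : ℝ)) ∧
    Set.BijOn (gfun b) (Set.Ioi 0) (Set.Ioi 0) := by
  have hpos : ∀ ξ ∈ Set.Ioi (0 : ℝ), gfun b ξ ∈ Set.Ioi (0 : ℝ) := fun ξ hξ => gfun_pos hb hξ
  exact ⟨gfun_strictAntiOn hb, hpos, hpos, (gfun_strictAntiOn hb).injOn, gfun_surjOn hb⟩

end
end

section
/- Let b > 0, γ = 1 + 16b/3, and let ω = (ω₀, ω₁) ∈ Ω with ω₁ > 0. Set ξ = √(γ·(4ω₀/ω₁² − 1)). Then Q₁(φ_ω) = (1/γ)·√(4ω₀ − ω₁²)·(1 − g(ξ)), where g(ξ) = (2(γ−1)/ξ)·arctan((1 + √(1 + ξ²))/ξ). -/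
/-!
Put `k = √(4ω₀ - ω₁²)`, `A = √(ω₁² + γ k²)` and `a = √γ k`, so that `a² = A² - ω₁²`, and let
`u = 2k² / (A cosh (k x) - ω₁)` be the squared profile. In polar form `φ = √u e^{iθ}` with
`θ' = ω₁/2 - u/4`, hence `i φ' φ̄ = (u²/4 - ω₁ u/2) + i u'/2` (`polar_integrand`), and
`Q₁(φ) = ½ (¼ ∫ u² - ½ ω₁ ∫ u)`; this uses that `u`, `u²` and `u'` are all integrable.

The integral of `u` comes from the antiderivative `(4k/a) arctan ((A e^{kx} - ω₁)/a)`
(`integral_sqProfile`). The integral of `u²` is reduced to that of `u` by differentiating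
`sinh (k x) / (A cosh (k x) - ω₁)` (`integral_sqProfile_sq`). A half-angle identity for `arctan`
(`two_mul_arctan_half`) brings the result into the form of `g`.
-/

open MeasureTheory

noncomputable section

/-- The squared profile `2k² / (A cosh (k x) - c)`, where `k = √(4ω₀ - ω₁²)`, `c = ω₁` and
`A = √(ω₁² + γ k²)`. -/
def sqProfile (k c A x : ℝ) : ℝ := 2 * k ^ 2 / (-c + A * Real.cosh (k * x))

/-- The derivative of `sqProfile`. -/
def sqProfileDeriv (k c A x : ℝ) : ℝ :=
  -(2 * k ^ 3 * A * Real.sinh (k * x)) / (-c + A * Real.cosh (k * x)) ^ 2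

/-- An antiderivative of `sqProfile`, when `a² = A² - c²`; it comes from substituting
`t = exp (k x)`. -/
def sqProfilePrim (k c A a x : ℝ) : ℝ :=
  4 * k / a * Real.arctan ((A * Real.exp (k * x) - c) / a)

lemma denom_pos {k c A : ℝ} (hc : 0 < c) (hA : c < A) (x : ℝ) :
    0 < -c + A * Real.cosh (k * x) := by
  nlinarith [Real.one_le_cosh (k * x)]

lemma sqProfile_pos {k c A : ℝ} (hk : 0 < k) (hc : 0 < c) (hA : c < A) (x : ℝ) :
    0 < sqProfile k c A x := by
  have := denom_pos (k := k) hc hA x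
  unfold sqProfile
  positivity

lemma sqProfile_le {k c A : ℝ} (hc : 0 < c) (hA : c < A) (x : ℝ) :
    sqProfile k c A x ≤ 2 * k ^ 2 / (A - c) := by
  unfold sqProfile
  have h1 : 0 < A - c := by linarith
  apply div_le_div_of_nonneg_left (by positivity) h1
  nlinarith [Real.one_le_cosh (k * x)]

lemma hasDerivAt_sqProfile {k c A : ℝ} (hc : 0 < c) (hA : c < A) (x : ℝ) :
    HasDerivAt (sqProfile k c A) (sqProfileDeriv k c A x) x := by
  have hD := denom_pos (k := k) hc hA x
  have h1 : HasDerivAt (fun y : ℝ => k * y) k x := by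
    simpa using (hasDerivAt_id x).const_mul k
  have h2 := ((h1.cosh.const_mul A).const_add (-c)).inv hD.ne'
  have h3 := h2.const_mul (2 * k ^ 2)
  refine (h3.congr_deriv ?_).congr_of_eventuallyEq (Filter.Eventually.of_forall fun y => ?_)
  · unfold sqProfileDeriv
    field_simp
  · simp [sqProfile, div_eq_mul_inv]

lemma hasDerivAt_sqProfilePrim {k c A a : ℝ} (hc : 0 < c) (hA : c < A) (ha : 0 < a)
    (haA : a ^ 2 = A ^ 2 - c ^ 2) (x : ℝ) :
    HasDerivAt (sqProfilePrim k c A a) (sqProfile k c A x) x := by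
  have hD := denom_pos (k := k) hc hA x
  have h1 : HasDerivAt (fun y : ℝ => k * y) k x := by
    simpa using (hasDerivAt_id x).const_mul k
  have h2 := ((((h1.exp.const_mul A).sub_const c).div_const a).arctan).const_mul (4 * k / a)
  refine h2.congr_deriv ?_
  unfold sqProfile
  rw [Real.cosh_eq, Real.exp_neg] at *
  have hE := Real.exp_pos (k * x)
  set E := Real.exp (k * x)
  have hD' : 0 < A * (E ^ 2 + 1) - 2 * c * E := by
    have : A * (E ^ 2 + 1) - 2 * c * E = 2 * E * (-c + A * ((E + E⁻¹) / 2)) := by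
      field_simp; ring
    rw [this]; positivity
  have hA0 : 0 < A := hc.trans hA
  have e1 : -c + A * ((E + E⁻¹) / 2) = (A * (E ^ 2 + 1) - 2 * c * E) / (2 * E) := by
    field_simp; ring
  have e2 : 1 + ((A * E - c) / a) ^ 2 = A * (A * (E ^ 2 + 1) - 2 * c * E) / a ^ 2 := by
    field_simp; rw [haA]; ring
  rw [e1, e2]
  field_simp
  ring

open Filter Topology in
lemma tendsto_sqProfilePrim_atBot {k c A a : ℝ} (hk : 0 < k) :
    Tendsto (sqProfilePrim k c A a) atBot (𝓝 (4 * k / a * Real.arctan (-c / a))) := by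
  have h0 : Tendsto (fun x : ℝ => Real.exp (k * x)) atBot (𝓝 0) :=
    Real.tendsto_exp_atBot.comp (tendsto_id.const_mul_atBot hk)
  have h1 : Continuous fun t : ℝ => 4 * k / a * Real.arctan ((A * t - c) / a) := by
    fun_prop
  have h2 := (h1.tendsto 0).comp h0
  rw [mul_zero, zero_sub] at h2
  exact h2

open Filter Topology in
lemma tendsto_sqProfilePrim_atTop {k c A a : ℝ} (hk : 0 < k) (hA : 0 < A) (ha : 0 < a) :
    Tendsto (sqProfilePrim k c A a) atTop (𝓝 (4 * k / a * (Real.pi / 2))) := by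
  have h0 : Tendsto (fun x : ℝ => Real.exp (k * x)) atTop atTop :=
    Real.tendsto_exp_atTop.comp (tendsto_id.const_mul_atTop hk)
  have h1 : Tendsto (fun x : ℝ => (A * Real.exp (k * x) - c) / a) atTop atTop :=
    (tendsto_atTop_add_const_right _ (-c) (h0.const_mul_atTop hA)).atTop_div_const ha
  exact ((Real.tendsto_arctan_atTop.mono_right nhdsWithin_le_nhds).comp h1).const_mul _

lemma continuous_sqProfile {k c A : ℝ} (hc : 0 < c) (hA : c < A) :
    Continuous (sqProfile k c A) :=
  continuous_iff_continuousAt.2 fun x => (hasDerivAt_sqProfile hc hA x).continuousAt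

open Filter Topology in
lemma integrable_sqProfile {k c A : ℝ} (hk : 0 < k) (hc : 0 < c) (hA : c < A) :
    Integrable (sqProfile k c A) := by
  have hpos : 0 < A ^ 2 - c ^ 2 := by nlinarith
  obtain ⟨a, ha, haA⟩ : ∃ a : ℝ, 0 < a ∧ a ^ 2 = A ^ 2 - c ^ 2 :=
    ⟨√(A ^ 2 - c ^ 2), Real.sqrt_pos.2 hpos, Real.sq_sqrt hpos.le⟩
  have hcont := continuous_sqProfile (k := k) hc hA
  refine integrable_of_intervalIntegral_norm_tendsto (l := atTop) (a := fun x : ℝ => -x)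
    (b := fun x : ℝ => x) (4 * k / a * (Real.pi / 2) - 4 * k / a * Real.arctan (-c / a))
    (fun i => (hcont.integrableOn_Icc).mono_set Set.Ioc_subset_Icc_self)
    tendsto_neg_atTop_atBot tendsto_id ?_
  refine ((tendsto_sqProfilePrim_atTop (c := c) hk (hc.trans hA) ha).sub
    ((tendsto_sqProfilePrim_atBot (A := A) hk).comp tendsto_neg_atTop_atBot)).congr fun x => ?_
  simp_rw [Real.norm_of_nonneg (sqProfile_pos hk hc hA _).le]
  exact (intervalIntegral.integral_eq_sub_of_hasDerivAt
    (fun y _ => hasDerivAt_sqProfilePrim hc hA ha haA y) (hcont.intervalIntegrable _ _)).symm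

lemma integral_sqProfile {k c A a : ℝ} (hk : 0 < k) (hc : 0 < c) (hA : c < A) (ha : 0 < a)
    (haA : a ^ 2 = A ^ 2 - c ^ 2) :
    ∫ x, sqProfile k c A x = 4 * k / a * (Real.pi / 2 + Real.arctan (c / a)) := by
  rw [integral_of_hasDerivAt_of_tendsto (hasDerivAt_sqProfilePrim hc hA ha haA)
    (integrable_sqProfile hk hc hA) (tendsto_sqProfilePrim_atBot hk)
    (tendsto_sqProfilePrim_atTop hk (hc.trans hA) ha), neg_div, Real.arctan_neg]
  ring

lemma integrable_sqProfile_sq {k c A : ℝ} (hk : 0 < k) (hc : 0 < c) (hA : c < A) :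
    Integrable (fun x => sqProfile k c A x ^ 2) := by
  refine ((integrable_sqProfile hk hc hA).const_mul (2 * k ^ 2 / (A - c))).mono'
    ((continuous_sqProfile hc hA).pow 2).aestronglyMeasurable (.of_forall fun x => ?_)
  have h := sqProfile_pos hk hc hA x
  rw [Real.norm_of_nonneg (by positivity), sq]
  exact mul_le_mul_of_nonneg_right (sqProfile_le hc hA x) h.le

/-- Since `A |sinh| ≤ A cosh`, the derivative is dominated by a combination of `sqProfile` and its
square. -/
lemma integrable_sqProfileDeriv {k c A : ℝ} (hk : 0 < k) (hc : 0 < c) (hA : c < A) :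
    Integrable (sqProfileDeriv k c A) := by
  refine (((integrable_sqProfile hk hc hA).const_mul k).add
    ((integrable_sqProfile_sq hk hc hA).const_mul (c / (2 * k)))).mono' ?_
    (.of_forall fun x => ?_)
  · refine (Continuous.div (by fun_prop) (by fun_prop) fun x => ?_).aestronglyMeasurable
    exact (pow_pos (denom_pos hc hA x) 2).ne'
  · have hD := denom_pos (k := k) hc hA x
    have hs : |Real.sinh (k * x)| ≤ Real.cosh (k * x) := by
      rw [abs_le]
      constructor
      · nlinarith [Real.cosh_add_sinh (k * x), Real.exp_pos (k * x)]
      · nlinarith [Real.cosh_sub_sinh (k * x), Real.exp_pos (-(k * x))]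
    have hA0 : 0 < A := hc.trans hA
    have e : (k * sqProfile k c A x + c / (2 * k) * sqProfile k c A x ^ 2)
        = 2 * k ^ 3 * A * Real.cosh (k * x) / (-c + A * Real.cosh (k * x)) ^ 2 := by
      unfold sqProfile
      field_simp
      ring
    simp only [Pi.add_apply]
    rw [e, sqProfileDeriv, Real.norm_eq_abs, abs_div, abs_neg, abs_mul,
      abs_of_pos (show 0 < 2 * k ^ 3 * A by positivity), abs_of_pos (pow_pos hD 2)]
    gcongr

/-- The square of the profile and the profile itself combine to a multiple of the derivative of
`sinh (k x) / (A cosh (k x) - c)`, which tends to `±1 / A` at `±∞`. -/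
lemma integral_sqProfile_sq {k c A a : ℝ} (hk : 0 < k) (hc : 0 < c) (hA : c < A)
    (haA : a ^ 2 = A ^ 2 - c ^ 2) :
    a ^ 2 / (4 * k ^ 4) * (∫ x, sqProfile k c A x ^ 2) - c / (2 * k ^ 2) * ∫ x, sqProfile k c A x
      = 2 / k := by
  have hA0 : 0 < A := hc.trans hA
  have i1 := (integrable_sqProfile_sq hk hc hA).const_mul (a ^ 2 / (4 * k ^ 4))
  have i2 := (integrable_sqProfile hk hc hA).const_mul (c / (2 * k ^ 2))
  have hd : ∀ x, HasDerivAt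
      (fun x => A / k * (Real.sinh (k * x) / (-c + A * Real.cosh (k * x))))
      (a ^ 2 / (4 * k ^ 4) * sqProfile k c A x ^ 2 - c / (2 * k ^ 2) * sqProfile k c A x) x := by
    intro x
    have hD := denom_pos (k := k) hc hA x
    have h1 : HasDerivAt (fun y : ℝ => k * y) k x := by
      simpa using (hasDerivAt_id x).const_mul k
    refine ((h1.sinh.div ((h1.cosh.const_mul A).const_add (-c)) hD.ne').const_mul
      (A / k)).congr_deriv ?_
    unfold sqProfile
    have hcs := Real.cosh_sq (k * x)
    rw [haA]
    field_simp
    rw [show Real.sinh (k * x) ^ 2 = Real.cosh (k * x) ^ 2 - 1 by linarith]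
    ring
  have hcont : ContinuousAt (fun t : ℝ => A / k * ((t ^ 2 - 1) / (A * t ^ 2 - 2 * c * t + A))) 0 := by
    refine ContinuousAt.mul (by fun_prop) (ContinuousAt.div (by fun_prop) (by fun_prop) ?_)
    simpa using hA0.ne'
  have key : ∀ t : ℝ, 0 < t → 0 < -c + A * ((t + t⁻¹) / 2) →
      ((t - t⁻¹) / 2) / (-c + A * ((t + t⁻¹) / 2)) = (t ^ 2 - 1) / (A * t ^ 2 - 2 * c * t + A) := by
    intro t ht hD
    have e1 : -c + A * ((t + t⁻¹) / 2) = (A * t ^ 2 - 2 * c * t + A) / (2 * t) := by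
      field_simp; ring
    have e2 : (t - t⁻¹) / 2 = (t ^ 2 - 1) / (2 * t) := by field_simp
    rw [e1, e2, div_div_div_cancel_right₀ (by positivity)]
  have hbot : Filter.Tendsto
      (fun x => A / k * (Real.sinh (k * x) / (-c + A * Real.cosh (k * x))))
      Filter.atBot (nhds (-(1 / k))) := by
    have h0 : Filter.Tendsto (fun x : ℝ => Real.exp (k * x)) Filter.atBot (nhds 0) :=
      Real.tendsto_exp_atBot.comp (Filter.tendsto_id.const_mul_atBot hk)
    have h1 := hcont.tendsto.comp h0
    have e : A / k * (((0 : ℝ) ^ 2 - 1) / (A * 0 ^ 2 - 2 * c * 0 + A)) = -(1 / k) := by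
      simp; field_simp
    rw [e] at h1
    refine h1.congr fun x => ?_
    have hD := denom_pos (k := k) hc hA x
    rw [Real.cosh_eq, Real.exp_neg] at hD
    simp only [Function.comp]
    rw [Real.cosh_eq, Real.sinh_eq, Real.exp_neg, key _ (Real.exp_pos _) hD]
  -- The function is odd, so the limit at `+∞` follows from the one at `-∞`.
  have htop : Filter.Tendsto
      (fun x => A / k * (Real.sinh (k * x) / (-c + A * Real.cosh (k * x))))
      Filter.atTop (nhds (1 / k)) := by
    have h := (hbot.comp Filter.tendsto_neg_atTop_atBot).neg
    rw [neg_neg] at h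
    refine h.congr fun x => ?_
    simp only [Function.comp, mul_neg, Real.sinh_neg, Real.cosh_neg, neg_div, neg_neg]
  rw [← integral_const_mul, ← integral_const_mul, ← integral_sub i1 i2,
    integral_of_hasDerivAt_of_tendsto hd (i1.sub i2) hbot htop]
  ring

/-- For `v = r e^{iθ}` in polar form, `i v' v̄ = i r r' - r² θ'`. -/
lemma polar_integrand {r θ : ℝ → ℝ} {r' θ' x : ℝ} (hr : HasDerivAt r r' x)
    (hθ : HasDerivAt θ θ' x) :
    Complex.I * deriv (fun y => (r y : ℂ) * Complex.exp (Complex.I * θ y)) x *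
      (starRingEnd ℂ) ((r x : ℂ) * Complex.exp (Complex.I * θ x)) =
      ((-(r x ^ 2 * θ') : ℝ) : ℂ) + ((r' * r x : ℝ) : ℂ) * Complex.I := by
  have h := (hr.ofReal_comp.mul ((hθ.ofReal_comp.const_mul Complex.I).cexp)).deriv
  have hd : deriv (fun y => (r y : ℂ) * Complex.exp (Complex.I * θ y)) x = _ := h
  rw [hd, map_mul, ← Complex.exp_conj, map_mul, Complex.conj_I, Complex.conj_ofReal,
    Complex.conj_ofReal, neg_mul, Complex.exp_neg]
  have hE := Complex.exp_ne_zero (Complex.I * θ x)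
  push_cast
  field_simp
  linear_combination (r x : ℂ) ^ 2 * θ' * Complex.I_sq

/-- The half-angle identity `tan θ + sec θ = tan (π/4 + θ/2)` with `tan θ = 1 / ξ`. -/
lemma two_mul_arctan_half {ξ : ℝ} (hξ : 0 < ξ) :
    2 * Real.arctan ((1 + √(1 + ξ ^ 2)) / ξ) = Real.pi / 2 + Real.arctan (1 / ξ) := by
  have hs : √(1 + ξ ^ 2) ^ 2 = 1 + ξ ^ 2 := Real.sq_sqrt (by positivity)
  have hs1 : 1 < √(1 + ξ ^ 2) := by
    rw [Real.lt_sqrt zero_le_one]; nlinarith [sq_pos_of_pos hξ]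
  set s := √(1 + ξ ^ 2)
  have hp : 0 < (1 + s) / ξ := by positivity
  have h1 := Real.arctan_inv_of_pos hp
  have h2 := Real.arctan_inv_of_pos (show 0 < 1 / ξ by positivity)
  have hlt : ξ / (1 + s) < 1 := by
    rw [div_lt_one (by positivity)]; nlinarith
  have hgt : 0 < ξ / (1 + s) := by positivity
  have h3 := Real.two_mul_arctan (x := ξ / (1 + s)) (by linarith) hlt
  have h4 : 2 * (ξ / (1 + s)) / (1 - (ξ / (1 + s)) ^ 2) = ξ := by
    have : 1 - (ξ / (1 + s)) ^ 2 = 2 / (1 + s) := by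
      field_simp; nlinarith
    rw [this]; field_simp
  rw [h4] at h3
  rw [inv_div] at h1 h2
  rw [div_one] at h2
  linarith

theorem stmt7 (b : ℝ) (hb : 0 < b) (ω₀ ω₁ : ℝ) (hΩ : ω₁ ^ 2 < 4 * ω₀) (hω₁ : 0 < ω₁) :
    Q1 (phi b ω₀ ω₁) =
      (1 / gam b) * Real.sqrt (4 * ω₀ - ω₁ ^ 2) *
        (1 - gfun b (Real.sqrt (gam b * (4 * ω₀ / ω₁ ^ 2 - 1)))) := by
  have hγ : 1 < gam b := by unfold gam; linarith
  obtain ⟨k, hk, hk2⟩ : ∃ k : ℝ, 0 < k ∧ k ^ 2 = 4 * ω₀ - ω₁ ^ 2 :=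
    ⟨√(4 * ω₀ - ω₁ ^ 2), Real.sqrt_pos.2 (by linarith), Real.sq_sqrt (by linarith)⟩
  have hsk : √(4 * ω₀ - ω₁ ^ 2) = k := by rw [← hk2, Real.sqrt_sq hk.le]
  set γ := gam b with hγdef
  have hγ0 : 0 < γ := by linarith
  set A := √(ω₁ ^ 2 + γ * k ^ 2) with hAdef
  have hA2 : A ^ 2 = ω₁ ^ 2 + γ * k ^ 2 := Real.sq_sqrt (by positivity)
  have hA : ω₁ < A := Real.lt_sqrt_of_sq_lt (by nlinarith [mul_pos hγ0 (pow_pos hk 2)])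
  obtain ⟨a, ha, ha2⟩ : ∃ a : ℝ, 0 < a ∧ a ^ 2 = γ * k ^ 2 :=
    ⟨√(γ * k ^ 2), Real.sqrt_pos.2 (by positivity), Real.sq_sqrt (by positivity)⟩
  have haA : a ^ 2 = A ^ 2 - ω₁ ^ 2 := by rw [ha2, hA2]; ring
  have hξ : √(γ * (4 * ω₀ / ω₁ ^ 2 - 1)) = a / ω₁ := by
    rw [show γ * (4 * ω₀ / ω₁ ^ 2 - 1) = (a / ω₁) ^ 2 by
      rw [div_pow, ha2, hk2]; field_simp, Real.sqrt_sq (by positivity)]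
  have hφ : ∀ x, phit b ω₀ ω₁ x = √(sqProfile k ω₁ A x) := by
    intro x
    rw [phit, hsk, ← hγdef, ← hk2]
    rfl
  have hφ2 : ∀ x, phit b ω₀ ω₁ x ^ 2 = sqProfile k ω₁ A x := fun x => by
    rw [hφ, Real.sq_sqrt (sqProfile_pos hk hω₁ hA x).le]
  have hint := integrable_sqProfile hk hω₁ hA
  have hint2 := integrable_sqProfile_sq hk hω₁ hA
  let θ : ℝ → ℝ := fun x => ω₁ / 2 * x - 1 / 4 *
    (sqProfilePrim k ω₁ A a x - 4 * k / a * Real.arctan (-ω₁ / a))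
  have hv : phi b ω₀ ω₁ =
      fun x => ((√(sqProfile k ω₁ A x) : ℝ) : ℂ) * Complex.exp (Complex.I * θ x) := by
    funext x
    rw [phi, hφ]
    simp_rw [hφ2]
    rw [integral_Iic_of_hasDerivAt_of_tendsto'
      (fun y _ => hasDerivAt_sqProfilePrim hω₁ hA ha haA y) hint.integrableOn
      (tendsto_sqProfilePrim_atBot hk)]
    congr 2
    simp only [θ]
    push_cast
    ring
  have hI : ∀ x, Complex.I * deriv (phi b ω₀ ω₁) x * (starRingEnd ℂ) (phi b ω₀ ω₁ x) =
      ((1 / 4 * sqProfile k ω₁ A x ^ 2 - ω₁ / 2 * sqProfile k ω₁ A x : ℝ) : ℂ) +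
        ((1 / 2 * sqProfileDeriv k ω₁ A x : ℝ) : ℂ) * Complex.I := by
    intro x
    have hp := sqProfile_pos hk hω₁ hA x
    have hr := (hasDerivAt_sqProfile (k := k) hω₁ hA x).sqrt hp.ne'
    have hθ : HasDerivAt θ (ω₁ / 2 - 1 / 4 * sqProfile k ω₁ A x) x := by
      have h1 := (hasDerivAt_id x).const_mul (ω₁ / 2)
      rw [mul_one] at h1
      exact h1.sub (((hasDerivAt_sqProfilePrim hω₁ hA ha haA x).sub_const _).const_mul (1 / 4))
    rw [hv, polar_integrand hr hθ, Real.sq_sqrt hp.le]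
    have hs := (Real.sqrt_pos.2 hp).ne'
    congr 3
    · ring
    · field_simp
  rw [Q1]
  simp_rw [hI]
  have i1 : Integrable fun x => 1 / 4 * sqProfile k ω₁ A x ^ 2 - ω₁ / 2 * sqProfile k ω₁ A x :=
    (hint2.const_mul _).sub (hint.const_mul _)
  have i2 : Integrable fun x => 1 / 2 * sqProfileDeriv k ω₁ A x :=
    (integrable_sqProfileDeriv hk hω₁ hA).const_mul _
  rw [integral_add i1.ofReal (i2.ofReal.mul_const _), integral_mul_const,
    integral_complex_ofReal, integral_complex_ofReal, Complex.add_re, Complex.re_ofReal_mul, Complex.I_re, mul_zero, add_zero,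
    Complex.ofReal_re, integral_sub (hint2.const_mul _) (hint.const_mul _), integral_const_mul,
    integral_const_mul]
  have hsq := integral_sqProfile_sq hk hω₁ hA haA
  have htot := integral_sqProfile hk hω₁ hA ha haA
  have hg : gfun b (a / ω₁) = ω₁ * (γ - 1) / (4 * k) * ∫ x, sqProfile k ω₁ A x := by
    have h := two_mul_arctan_half (show 0 < a / ω₁ by positivity)
    rw [one_div_div] at h
    rw [htot, ← h, gfun, ← hγdef]
    field_simp
  rw [hξ, hsk, hg]
  rw [ha2] at hsq
  set J := ∫ x, sqProfile k ω₁ A x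
  set K := ∫ x, sqProfile k ω₁ A x ^ 2
  have hK : K = 4 * k ^ 2 / γ * (2 / k + ω₁ / (2 * k ^ 2) * J) := by
    rw [← hsq]
    field_simp
    ring
  rw [hK]
  field_simp
  ring

end
end

section
/- Let ω = (ω₀, ω₁) ∈ ℝ² with ω₁² < 4ω₀. Then there exists a constant C > 0 such that for every differentiable v : ℝ → ℂ with v and v' square-integrable, L_ω(v) ≥ C·(∫_ℝ |v(x)|² dx + ∫_ℝ |v'(x)|² dx), where L_ω(v) = ∫_ℝ |v'(x)|² dx + ω₀∫_ℝ |v(x)|² dx + ω₁·Re ∫_ℝ i·v'(x)·conj(v(x)) dx. -/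
/-!
The cross term is controlled pointwise: for `C = (4ω₀ - ω₁²) / (4 (1 + ω₀))` one has
`4 (1 - C) (ω₀ - C) = ω₁² + 4 C²`, so the quadratic form
`(1 - C) p² - |ω₁| p q + (ω₀ - C) q²` is nonnegative (`cross_term_le`). Taking `p = ‖v' x‖`,
`q = ‖v x‖` and integrating gives
`|ω₁| |∫ i v' conj v| ≤ (1 - C) ∫ |v'|² + (ω₀ - C) ∫ |v|²`, which is the claim.
-/

open MeasureTheory

noncomputable section

/-- A binary quadratic form with positive leading coefficient and nonpositive discriminant is
nonnegative. -/
lemma cross_term_le {A B w : ℝ} (hA : 0 < A) (hd : w ^ 2 ≤ 4 * A * B) (p q : ℝ) :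
    w * (p * q) ≤ A * p ^ 2 + B * q ^ 2 := by
  have h1 : 0 ≤ 4 * A * (A * p ^ 2 + B * q ^ 2 - w * (p * q)) := by
    have h2 : 4 * A * (A * p ^ 2 + B * q ^ 2 - w * (p * q))
        = (2 * A * p - w * q) ^ 2 + (4 * A * B - w ^ 2) * q ^ 2 := by ring
    rw [h2]
    exact add_nonneg (sq_nonneg _) (mul_nonneg (sub_nonneg.2 hd) (sq_nonneg _))
  linarith [nonneg_of_mul_nonneg_right h1 (by positivity)]

theorem stmt11 (ω₀ ω₁ : ℝ) (hΩ : ω₁ ^ 2 < 4 * ω₀) :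
    ∃ C > (0 : ℝ), ∀ v : ℝ → ℂ, H1 v →
      C * ((∫ x : ℝ, ‖v x‖ ^ 2) + ∫ x : ℝ, ‖deriv v x‖ ^ 2) ≤ Lfun ω₀ ω₁ v := by
  have hω₀ : 0 < ω₀ := by nlinarith [sq_nonneg ω₁]
  have hs : 0 < 4 * (1 + ω₀) := by positivity
  obtain ⟨C, hC⟩ : ∃ C, C = (4 * ω₀ - ω₁ ^ 2) / (4 * (1 + ω₀)) := ⟨_, rfl⟩
  have hCpos : 0 < C := hC ▸ div_pos (by linarith) hs
  have hC1 : C < 1 := by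
    rw [hC, div_lt_one hs]
    nlinarith [sq_nonneg ω₁]
  have hCeq : C * (4 * (1 + ω₀)) = 4 * ω₀ - ω₁ ^ 2 := by
    rw [hC, div_mul_cancel₀ _ hs.ne']
  have hdisc : |ω₁| ^ 2 ≤ 4 * (1 - C) * (ω₀ - C) := by
    rw [sq_abs]
    nlinarith [sq_nonneg C]
  refine ⟨C, hCpos, fun v ⟨_, hv, hv'⟩ => ?_⟩
  have hA := hv'.const_mul (1 - C)
  have hB := hv.const_mul (ω₀ - C)
  -- Neither inequality below needs integrability of the cross term, only of the upper bound.
  have hcross : |ω₁| * ‖∫ x : ℝ, Complex.I * deriv v x * (starRingEnd ℂ) (v x)‖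
      ≤ (1 - C) * (∫ x : ℝ, ‖deriv v x‖ ^ 2) + (ω₀ - C) * ∫ x : ℝ, ‖v x‖ ^ 2 :=
    calc _ ≤ |ω₁| * ∫ x : ℝ, ‖Complex.I * deriv v x * (starRingEnd ℂ) (v x)‖ := by
          gcongr
          exact norm_integral_le_integral_norm _
      _ = ∫ x : ℝ, |ω₁| * ‖Complex.I * deriv v x * (starRingEnd ℂ) (v x)‖ :=
          (integral_const_mul _ _).symm
      _ ≤ ∫ x : ℝ, ((1 - C) * ‖deriv v x‖ ^ 2 + (ω₀ - C) * ‖v x‖ ^ 2) := by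
          refine integral_mono_of_nonneg (.of_forall fun x => by positivity) (hA.add hB)
            (.of_forall fun x => ?_)
          simpa using cross_term_le (sub_pos.2 hC1) hdisc ‖deriv v x‖ ‖v x‖
      _ = _ := by rw [integral_add hA hB, integral_const_mul, integral_const_mul]
  have hre : -(|ω₁| * ‖∫ x : ℝ, Complex.I * deriv v x * (starRingEnd ℂ) (v x)‖)
      ≤ ω₁ * (∫ x : ℝ, Complex.I * deriv v x * (starRingEnd ℂ) (v x)).re := by
    refine le_trans (neg_le_neg ?_) (neg_abs_le _)
    rw [abs_mul]
    gcongr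
    exact Complex.abs_re_le_norm _
  unfold Lfun
  linarith

end
end

section
/- Let b > 0 and let ω = (ω₀, ω₁) ∈ ℝ² with ω₁² < 4ω₀. Then there exists a constant c > 0 such that S_ω(v) ≥ c for every differentiable v : ℝ → ℂ with v, v' square-integrable, v not identically zero, and K_ω(v) = 0; in particular the infimum μ(ω) = inf{S_ω(v) : v ∈ H¹(ℝ), v ≠ 0, K_ω(v) = 0} is strictly positive. -/
/-!
On the constraint `K = 0` one has `S = S - K / 4 = L / 4 + (b / 12) ∫ |v|⁶ ≥ L / 4`. Completing the
square, `ω₁² < 4 ω₀` makes `L` coercive: `L ≥ δ H` with `H = ∫ |v|² + ∫ |v'|²` (`Lfun_coercive`).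
The Sobolev inequality `sup |v|² ≤ H` (`sobolev_sup`) gives `P ≤ H²` and `∫ |v|⁶ ≤ H³`, so `K = 0`
forces `δ H ≤ H² + b H³`. As `H > 0` for `v ≠ 0`, this bounds `H`, and hence `S`, away from zero.

Since the infimum of the empty set of reals is `0`, positivity of the infimum also requires the
constraint set to be nonempty: on multiples `t v` of a real Gaussian `v`, the term `P` vanishes and
`K = t² L - b t⁶ ∫ |v|⁶`, which has a positive zero `t` (`nehari_nonempty`).
-/

open MeasureTheory

noncomputable section

/-- The squared `H¹` norm `∫ |v|² + ∫ |v'|²`. -/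
def h1sq (v : ℝ → ℂ) : ℝ := (∫ x : ℝ, ‖v x‖ ^ 2) + ∫ x : ℝ, ‖deriv v x‖ ^ 2

lemma h1sq_nonneg (v : ℝ → ℂ) : 0 ≤ h1sq v :=
  add_nonneg (integral_nonneg fun _ => by positivity) (integral_nonneg fun _ => by positivity)

/-- The embedding of `H¹(ℝ)` into bounded functions: `(|v|²)' = 2 Re (conj v v')` is dominated by
`|v|² + |v'|²`, hence integrable, and `|v|²` vanishes at `-∞`. -/
lemma sobolev_sup {v : ℝ → ℂ} (hv : H1 v) (x : ℝ) : ‖v x‖ ^ 2 ≤ h1sq v := by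
  obtain ⟨hd, h2, h2'⟩ := hv
  set f : ℝ → ℝ := fun y => ‖v y‖ ^ 2 with hf
  set f' : ℝ → ℝ := fun y => 2 * inner ℝ (v y) (deriv v y) with hf'
  have hder : ∀ y, HasDerivAt f (f' y) y := fun y => (hd y).hasDerivAt.norm_sq
  have hbd : ∀ y, ‖f' y‖ ≤ ‖v y‖ ^ 2 + ‖deriv v y‖ ^ 2 := fun y => by
    have := abs_real_inner_le_norm (v y) (deriv v y)
    rw [hf', Real.norm_eq_abs, abs_mul, abs_two]
    nlinarith [sq_nonneg (‖v y‖ - ‖deriv v y‖)]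
  have hfm : AEStronglyMeasurable f' volume := by
    have : f' = deriv f := funext fun y => ((hder y).deriv).symm
    rw [this]
    exact (measurable_deriv f).aestronglyMeasurable
  have hf'i : Integrable f' := (h2.add h2').mono' hfm (Filter.Eventually.of_forall hbd)
  have hlim : Filter.Tendsto f Filter.atBot (nhds 0) :=
    tendsto_zero_of_hasDerivAt_of_integrableOn_Iic (a := x) (fun y _ => hder y)
      hf'i.integrableOn h2.integrableOn
  have hFTC : ∫ y in Set.Iic x, f' y = f x - 0 :=
    integral_Iic_of_hasDerivAt_of_tendsto' (fun y _ => hder y) hf'i.integrableOn hlim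
  have hle : ‖∫ y in Set.Iic x, f' y‖ ≤ ∫ y in Set.Iic x, (‖v y‖ ^ 2 + ‖deriv v y‖ ^ 2) :=
    norm_integral_le_of_norm_le (h2.add h2').integrableOn (Filter.Eventually.of_forall hbd)
  have hle2 : ∫ y in Set.Iic x, (‖v y‖ ^ 2 + ‖deriv v y‖ ^ 2) ≤
      ∫ y, (‖v y‖ ^ 2 + ‖deriv v y‖ ^ 2) :=
    setIntegral_le_integral (h2.add h2') (Filter.Eventually.of_forall fun y => by positivity)
  rw [integral_add h2 h2'] at hle2
  have hx : f x ≤ ‖∫ y in Set.Iic x, f' y‖ := by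
    rw [hFTC, sub_zero]
    exact Real.le_norm_self _
  exact hx.trans (hle.trans hle2)

lemma h1sq_pos {v : ℝ → ℂ} (hv : H1 v) (h0 : v ≠ 0) : 0 < h1sq v := by
  obtain ⟨x, hx⟩ := Function.ne_iff.mp h0
  have : 0 < ‖v x‖ := norm_pos_iff.mpr hx
  exact (by positivity : 0 < ‖v x‖ ^ 2).trans_le (sobolev_sup hv x)

/-- The constant solves `(1 - δ) (ω₀ - δ) ≥ ω₁² / 4`, which makes the quadratic form
`(1 - δ) p² - |ω₁| p q + (ω₀ - δ) q²` nonnegative. -/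
lemma Lfun_coercive {ω₀ ω₁ : ℝ} (hΩ : ω₁ ^ 2 < 4 * ω₀) {v : ℝ → ℂ} (hv : H1 v) :
    (ω₀ - ω₁ ^ 2 / 4) / (1 + ω₀) * h1sq v ≤ Lfun ω₀ ω₁ v := by
  obtain ⟨hd, h2, h2'⟩ := hv
  have hω : 0 < ω₀ := by nlinarith [sq_nonneg ω₁]
  set δ := (ω₀ - ω₁ ^ 2 / 4) / (1 + ω₀) with hδ
  have hδe : δ * (1 + ω₀) = ω₀ - ω₁ ^ 2 / 4 := by rw [hδ]; field_simp
  have hδ1 : 0 < 1 - δ := by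
    rw [sub_pos, hδ, div_lt_one (by positivity)]
    nlinarith [sq_nonneg ω₁]
  have hpt : ∀ p q : ℝ, |ω₁| * (p * q) ≤ (1 - δ) * p ^ 2 + (ω₀ - δ) * q ^ 2 := by
    intro p q
    have hdisc : |ω₁| ^ 2 / 4 ≤ (1 - δ) * (ω₀ - δ) := by
      rw [sq_abs]; nlinarith [sq_nonneg δ]
    have h1 : 0 ≤ (1 - δ) * ((1 - δ) * p ^ 2 + (ω₀ - δ) * q ^ 2 - |ω₁| * (p * q)) := by
      nlinarith [sq_nonneg ((1 - δ) * p - |ω₁| / 2 * q),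
        mul_le_mul_of_nonneg_right hdisc (sq_nonneg q)]
    linarith [nonneg_of_mul_nonneg_right h1 hδ1]
  have hi : Integrable fun x => (1 - δ) * ‖deriv v x‖ ^ 2 + (ω₀ - δ) * ‖v x‖ ^ 2 :=
    (h2'.const_mul _).add (h2.const_mul _)
  have hI := norm_integral_le_of_norm_le
    (f := fun x => (ω₁ : ℂ) * (Complex.I * deriv v x * (starRingEnd ℂ) (v x))) hi
    (Filter.Eventually.of_forall fun x => by
      simpa [Complex.norm_mul] using hpt ‖deriv v x‖ ‖v x‖)
  rw [integral_const_mul, integral_add (h2'.const_mul _) (h2.const_mul _), integral_const_mul,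
    integral_const_mul] at hI
  have hre := (Complex.abs_re_le_norm _).trans hI
  rw [Complex.re_ofReal_mul] at hre
  have := (abs_le.mp hre).1
  unfold Lfun h1sq
  linarith

lemma Pfun_le {v : ℝ → ℂ} (hv : H1 v) : Pfun v ≤ h1sq v ^ 2 := by
  have hs := sobolev_sup hv
  obtain ⟨hd, h2, h2'⟩ := hv
  have hI := norm_integral_le_of_norm_le
    (f := fun x => Complex.I * (‖v x‖ : ℂ) ^ 2 * deriv v x * (starRingEnd ℂ) (v x))
    ((h2.add h2').const_mul (h1sq v))
    (Filter.Eventually.of_forall fun x => by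
      have h1 : ‖deriv v x‖ * ‖v x‖ ≤ ‖v x‖ ^ 2 + ‖deriv v x‖ ^ 2 := by
        nlinarith [sq_nonneg (‖v x‖ - ‖deriv v x‖), sq_nonneg ‖v x‖, sq_nonneg ‖deriv v x‖]
      have := mul_le_mul (hs x) h1 (by positivity) (h1sq_nonneg v)
      simpa [Complex.norm_mul, mul_assoc] using this)
  rw [integral_const_mul] at hI
  have e : ∫ x, ((fun x => ‖v x‖ ^ 2) + fun x => ‖deriv v x‖ ^ 2) x = h1sq v :=
    integral_add h2 h2'
  rw [e] at hI
  unfold Pfun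
  nlinarith [Complex.re_le_norm
    (∫ x, Complex.I * (‖v x‖ : ℂ) ^ 2 * deriv v x * (starRingEnd ℂ) (v x))]

lemma sextic_le {v : ℝ → ℂ} (hv : H1 v) : ∫ x : ℝ, ‖v x‖ ^ 6 ≤ h1sq v ^ 3 := by
  have hs := sobolev_sup hv
  obtain ⟨hd, h2, h2'⟩ := hv
  have h1 : ∫ x : ℝ, ‖v x‖ ^ 6 ≤ ∫ x : ℝ, h1sq v ^ 2 * ‖v x‖ ^ 2 := by
    refine integral_mono_of_nonneg (Filter.Eventually.of_forall fun x => by positivity)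
      (h2.const_mul _) (Filter.Eventually.of_forall fun x => ?_)
    have := pow_le_pow_left₀ (by positivity) (hs x) 2
    have := mul_le_mul_of_nonneg_right this (sq_nonneg ‖v x‖)
    calc ‖v x‖ ^ 6 = (‖v x‖ ^ 2) ^ 2 * ‖v x‖ ^ 2 := by ring
      _ ≤ _ := this
  rw [integral_const_mul] at h1
  have h3 : ∫ x : ℝ, ‖v x‖ ^ 2 ≤ h1sq v :=
    le_add_of_nonneg_right (integral_nonneg fun _ => by positivity)
  nlinarith [mul_le_mul_of_nonneg_left h3 (sq_nonneg (h1sq v))]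

lemma exists_lower_bound {b ω₀ ω₁ : ℝ} (hb : 0 < b) (hΩ : ω₁ ^ 2 < 4 * ω₀) :
    ∃ c > (0 : ℝ), ∀ v : ℝ → ℂ, H1 v → v ≠ 0 → Kfun b ω₀ ω₁ v = 0 → c ≤ Sfun b ω₀ ω₁ v := by
  have hω : 0 < ω₀ := by nlinarith [sq_nonneg ω₁]
  have hδ : 0 < (ω₀ - ω₁ ^ 2 / 4) / (1 + ω₀) := div_pos (by linarith) (by linarith)
  refine ⟨(ω₀ - ω₁ ^ 2 / 4) / (1 + ω₀) / 4 *
    min 1 ((ω₀ - ω₁ ^ 2 / 4) / (1 + ω₀) / (1 + b)), by positivity, fun v hv h0 hK => ?_⟩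
  have hL := Lfun_coercive hΩ hv
  have hP := Pfun_le hv
  have hN := sextic_le hv
  have hN0 : 0 ≤ ∫ x : ℝ, ‖v x‖ ^ 6 := integral_nonneg fun _ => by positivity
  have hH := h1sq_pos hv h0
  set δ := (ω₀ - ω₁ ^ 2 / 4) / (1 + ω₀)
  have hS : δ / 4 * h1sq v ≤ Sfun b ω₀ ω₁ v := by
    unfold Kfun at hK
    unfold Sfun
    nlinarith [mul_nonneg hb.le hN0]
  -- Dividing `δ H ≤ L = P + b ∫ |v|⁶ ≤ H² + b H³` by `H`.
  have hδH : δ ≤ h1sq v + b * h1sq v ^ 2 := by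
    unfold Kfun at hK
    have hbN := mul_le_mul_of_nonneg_left hN hb.le
    refine le_of_mul_le_mul_right ?_ hH
    nlinarith
  have hmin : min 1 (δ / (1 + b)) ≤ h1sq v := by
    by_cases h1 : 1 ≤ h1sq v
    · exact (min_le_left _ _).trans h1
    · refine (min_le_right _ _).trans ?_
      rw [div_le_iff₀ (by positivity)]
      have : h1sq v ^ 2 ≤ h1sq v := by nlinarith
      nlinarith [mul_le_mul_of_nonneg_left this hb.le]
  exact (mul_le_mul_of_nonneg_left hmin (by positivity)).trans hS

/-- A multiple of the Gaussian `exp (-x²)`, as a complex-valued function. -/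
def gauss (t : ℝ) (x : ℝ) : ℂ := ((t * Real.exp (-x ^ 2) : ℝ) : ℂ)

lemma gauss_hasDerivAt (t x : ℝ) :
    HasDerivAt (gauss t) ((t * (-2 * x * Real.exp (-x ^ 2)) : ℝ) : ℂ) x := by
  have h : HasDerivAt (fun x : ℝ => t * Real.exp (-x ^ 2)) (t * (-2 * x * Real.exp (-x ^ 2))) x := by
    have h1 : HasDerivAt (fun x : ℝ => -x ^ 2) (-2 * x) x := by
      simpa using (hasDerivAt_pow 2 x).fun_neg
    rw [mul_comm (-2 * x)]
    exact h1.exp.const_mul t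
  exact h.ofReal_comp

lemma gauss_norm_sq (t x : ℝ) : ‖gauss t x‖ ^ 2 = t ^ 2 * Real.exp (-2 * x ^ 2) := by
  rw [gauss, Complex.norm_real, Real.norm_eq_abs, sq_abs, mul_pow, ← Real.exp_nat_mul]
  congr 2
  push_cast
  ring

lemma gauss_norm_pow_six (t x : ℝ) : ‖gauss t x‖ ^ 6 = t ^ 6 * Real.exp (-6 * x ^ 2) := by
  have : ‖gauss t x‖ ^ 6 = (‖gauss t x‖ ^ 2) ^ 3 := by ring
  rw [this, gauss_norm_sq, mul_pow, ← Real.exp_nat_mul, ← pow_mul]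
  congr 2
  push_cast
  ring

lemma gauss_deriv_norm_sq (t x : ℝ) :
    ‖deriv (gauss t) x‖ ^ 2 = t ^ 2 * (4 * (x ^ 2 * Real.exp (-2 * x ^ 2))) := by
  have : Real.exp (-2 * x ^ 2) = Real.exp (-x ^ 2) ^ 2 := by
    rw [← Real.exp_nat_mul]
    congr 1
    push_cast
    ring
  rw [(gauss_hasDerivAt t x).deriv, Complex.norm_real, Real.norm_eq_abs, sq_abs, this]
  ring

lemma integrable_sq_mul_exp : Integrable fun x : ℝ => x ^ 2 * Real.exp (-2 * x ^ 2) := by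
  have := integrable_rpow_mul_exp_neg_mul_sq (b := 2) (by norm_num) (s := 2) (by norm_num)
  simpa using this

lemma gauss_H1 (t : ℝ) : H1 (gauss t) := by
  refine ⟨fun x => (gauss_hasDerivAt t x).differentiableAt, ?_, ?_⟩
  · simp_rw [gauss_norm_sq]
    exact (integrable_exp_neg_mul_sq (by norm_num : (0 : ℝ) < 2)).const_mul _
  · simp_rw [gauss_deriv_norm_sq]
    exact (integrable_sq_mul_exp.const_mul 4).const_mul _

/-- For real `v` the integrand `i v' conj v` is purely imaginary, so the `ω₁` term and `P` vanish. -/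
lemma gauss_Kfun (b ω₀ ω₁ t : ℝ) : Kfun b ω₀ ω₁ (gauss t) =
    t ^ 2 * ((∫ x : ℝ, 4 * (x ^ 2 * Real.exp (-2 * x ^ 2))) +
      ω₀ * ∫ x : ℝ, Real.exp (-2 * x ^ 2)) - b * (t ^ 6 * ∫ x : ℝ, Real.exp (-6 * x ^ 2)) := by
  have h1 : (∫ x : ℝ, Complex.I * deriv (gauss t) x * (starRingEnd ℂ) (gauss t x)).re = 0 := by
    have : ∀ x : ℝ, Complex.I * deriv (gauss t) x * (starRingEnd ℂ) (gauss t x) =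
        Complex.I * ((t * (-2 * x * Real.exp (-x ^ 2)) * (t * Real.exp (-x ^ 2)) : ℝ) : ℂ) := by
      intro x
      rw [(gauss_hasDerivAt t x).deriv, gauss, Complex.conj_ofReal]
      push_cast
      ring
    simp_rw [this]
    rw [integral_const_mul, integral_complex_ofReal]
    simp
  have h2 : Pfun (gauss t) = 0 := by
    have : ∀ x : ℝ, Complex.I * (‖gauss t x‖ : ℂ) ^ 2 * deriv (gauss t) x *
        (starRingEnd ℂ) (gauss t x) = Complex.I *
        ((‖gauss t x‖ ^ 2 * (t * (-2 * x * Real.exp (-x ^ 2))) * (t * Real.exp (-x ^ 2)) : ℝ) : ℂ) := by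
      intro x
      rw [(gauss_hasDerivAt t x).deriv]
      generalize ‖gauss t x‖ = r
      rw [gauss, Complex.conj_ofReal]
      push_cast
      ring
    unfold Pfun
    simp_rw [this]
    rw [integral_const_mul, integral_complex_ofReal]
    simp
  unfold Kfun Lfun
  rw [h1, h2]
  simp_rw [gauss_norm_sq, gauss_deriv_norm_sq, gauss_norm_pow_six]
  rw [integral_const_mul (t ^ 2), integral_const_mul (t ^ 2), integral_const_mul (t ^ 6)]
  ring

lemma nehari_nonempty {b ω₀ : ℝ} (ω₁ : ℝ) (hb : 0 < b) (hω : 0 < ω₀) :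
    ∃ v : ℝ → ℂ, H1 v ∧ v ≠ 0 ∧ Kfun b ω₀ ω₁ v = 0 := by
  set A := ∫ x : ℝ, 4 * (x ^ 2 * Real.exp (-2 * x ^ 2)) with hA
  set B := ∫ x : ℝ, Real.exp (-2 * x ^ 2) with hB
  set N := ∫ x : ℝ, Real.exp (-6 * x ^ 2) with hN
  have hA0 : 0 ≤ A := integral_nonneg fun x => by positivity
  have hB0 : 0 < B := by rw [hB, integral_gaussian]; positivity
  have hN0 : 0 < N := by rw [hN, integral_gaussian]; positivity
  have hL : 0 < A + ω₀ * B := by positivity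
  -- The zero `t` of `t² (A + ω₀ B) - b t⁶ N`.
  set t := √√((A + ω₀ * B) / (b * N)) with ht
  have ht0 : 0 < t := by positivity
  have ht4 : t ^ 4 = (A + ω₀ * B) / (b * N) := by
    have : t ^ 4 = (t ^ 2) ^ 2 := by ring
    rw [this, ht, Real.sq_sqrt (by positivity), Real.sq_sqrt (by positivity)]
  refine ⟨gauss t, gauss_H1 t, fun h => ?_, ?_⟩
  · have h0 := congrFun h 0
    simp [gauss] at h0
    exact ht0.ne' h0
  · rw [gauss_Kfun, ← hA, ← hB, ← hN]
    have h6 : t ^ 6 = t ^ 2 * t ^ 4 := by ring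
    rw [h6, ht4]
    field_simp
    ring

theorem stmt12 (b : ℝ) (hb : 0 < b) (ω₀ ω₁ : ℝ) (hΩ : ω₁ ^ 2 < 4 * ω₀) :
    (∃ c > (0 : ℝ), ∀ v : ℝ → ℂ, H1 v → v ≠ 0 → Kfun b ω₀ ω₁ v = 0 → c ≤ Sfun b ω₀ ω₁ v) ∧
    0 < sInf {s : ℝ | ∃ v : ℝ → ℂ, H1 v ∧ v ≠ 0 ∧ Kfun b ω₀ ω₁ v = 0 ∧ s = Sfun b ω₀ ω₁ v} := by
  obtain ⟨c, hc, hS⟩ := exists_lower_bound hb hΩ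
  refine ⟨⟨c, hc, hS⟩, hc.trans_le (le_csInf ?_ ?_)⟩
  · obtain ⟨v, h1, h2, h3⟩ := nehari_nonempty ω₁ hb (by nlinarith [sq_nonneg ω₁] : 0 < ω₀)
    exact ⟨_, v, h1, h2, h3, rfl⟩
  · rintro s ⟨v, h1, h2, h3, rfl⟩
    exact hS v h1 h2 h3

end
end

section
/- Let b > 0 and let ω = (ω₀, ω₁) ∈ ℝ² with ω₁² < 4ω₀. If a differentiable v : ℝ → ℂ with v, v' square-integrable satisfies K_ω(v) < 0, then μ(ω) < S̃_ω(v), where μ(ω) = inf{S_ω(w) : w ∈ H¹(ℝ), w ≠ 0, K_ω(w) = 0} and S̃_ω(v) = (1/4)L_ω(v) + (b/12)∫_ℝ |v|⁶ dx. -/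
/-!
The proof scales `v` down to the Nehari set. By Young's inequality and `ω₁² < 4ω₀`, `L_ω` is
positive on nonzero functions (`Lfun_pos`). The functionals `L_ω`, `P` and `∫ |v|⁶` are homogeneous
of degrees 2, 4 and 6, so `K_ω(r v) = r² (L_ω(v) - r² P(v) - r⁴ b ∫ |v|⁶)`, whose second factor is
positive at `r = 0` and negative at `r = 1`; hence `K_ω(r v) = 0` for some `r ∈ (0, 1)`.
Since `S_ω = K_ω / 4 + S̃_ω`, the action is nonnegative on the Nehari set, so that the infimum is
at most `S_ω(r v) = S̃_ω(r v) = r² L_ω(v) / 4 + r⁶ (b / 12) ∫ |v|⁶`, and this is less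
than `S̃_ω(v)`.
-/

open MeasureTheory

noncomputable section

/-- Young's inequality `|ω₁| |v'| |v| ≤ |v'|² + (ω₁² / 4) |v|²` makes `L_ω` coercive on `L²`. -/
theorem le_Lfun (ω₀ ω₁ : ℝ) (v : ℝ → ℂ) (hv : H1 v) :
    (ω₀ - ω₁ ^ 2 / 4) * ∫ x : ℝ, ‖v x‖ ^ 2 ≤ Lfun ω₀ ω₁ v := by
  obtain ⟨hd, h2, h2'⟩ := hv
  have hYoung : |ω₁| * ‖∫ x : ℝ, Complex.I * deriv v x * (starRingEnd ℂ) (v x)‖ ≤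
      ∫ x : ℝ, (‖deriv v x‖ ^ 2 + ω₁ ^ 2 / 4 * ‖v x‖ ^ 2) := by
    rw [← Real.norm_eq_abs, ← Complex.norm_real, ← norm_mul, ← integral_const_mul]
    refine norm_integral_le_of_norm_le (h2'.add (h2.const_mul _)) (Filter.Eventually.of_forall ?_)
    intro x
    simp only [norm_mul, Complex.norm_I, Complex.norm_real, Real.norm_eq_abs, RCLike.norm_conj,
      one_mul]
    nlinarith [sq_nonneg (‖deriv v x‖ - |ω₁| / 2 * ‖v x‖), sq_abs ω₁]
  rw [integral_add h2' (h2.const_mul _), integral_const_mul] at hYoung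
  have hre := Complex.abs_re_le_norm (∫ x : ℝ, Complex.I * deriv v x * (starRingEnd ℂ) (v x))
  have hcross := neg_abs_le
    (ω₁ * (∫ x : ℝ, Complex.I * deriv v x * (starRingEnd ℂ) (v x)).re)
  rw [abs_mul] at hcross
  have hmul := mul_le_mul_of_nonneg_left hre (abs_nonneg ω₁)
  unfold Lfun
  linarith

theorem Lfun_pos {ω₀ ω₁ : ℝ} (hΩ : ω₁ ^ 2 < 4 * ω₀) {v : ℝ → ℂ} (hv : H1 v) (h0 : v ≠ 0) :
    0 < Lfun ω₀ ω₁ v := by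
  refine lt_of_lt_of_le (mul_pos (by linarith) ?_) (le_Lfun ω₀ ω₁ v hv)
  obtain ⟨x, hx⟩ := Function.ne_iff.mp h0
  have hx' : v x ≠ 0 := hx
  have hc : Continuous fun x => ‖v x‖ ^ 2 := hv.1.continuous.norm.pow 2
  exact integral_pos_of_integrable_nonneg_nonzero hc hv.2.1 (fun x => by positivity)
    (x := x) (by positivity)

theorem integral_norm_pow_six_nonneg (v : ℝ → ℂ) : 0 ≤ ∫ x : ℝ, ‖v x‖ ^ 6 :=
  integral_nonneg fun x => by positivity

theorem H1_smul (r : ℝ) {v : ℝ → ℂ} (hv : H1 v) : H1 fun x => (r : ℂ) * v x := by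
  refine ⟨hv.1.const_mul _, ?_, ?_⟩
  · simpa [mul_pow] using hv.2.1.const_mul (r ^ 2)
  · simpa [mul_pow, deriv_const_mul_field] using hv.2.2.const_mul (r ^ 2)

theorem Lfun_smul (ω₀ ω₁ r : ℝ) (v : ℝ → ℂ) :
    Lfun ω₀ ω₁ (fun x => (r : ℂ) * v x) = r ^ 2 * Lfun ω₀ ω₁ v := by
  have h (x : ℝ) : Complex.I * ((r : ℂ) * deriv v x) * ((r : ℂ) * (starRingEnd ℂ) (v x)) =
      ((r ^ 2 : ℝ) : ℂ) * (Complex.I * deriv v x * (starRingEnd ℂ) (v x)) := by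
    push_cast; ring
  simp only [Lfun, deriv_const_mul_field, norm_mul, mul_pow, Complex.norm_real, Real.norm_eq_abs,
    sq_abs, map_mul, Complex.conj_ofReal, h, integral_const_mul, Complex.re_ofReal_mul]
  ring

theorem Pfun_smul (r : ℝ) (v : ℝ → ℂ) :
    Pfun (fun x => (r : ℂ) * v x) = r ^ 4 * Pfun v := by
  have hr : ((|r| : ℝ) : ℂ) ^ 2 = (r : ℂ) ^ 2 := by exact_mod_cast sq_abs r
  have h (x : ℝ) : Complex.I * ((r : ℂ) ^ 2 * (‖v x‖ : ℂ) ^ 2) * ((r : ℂ) * deriv v x) *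
        ((r : ℂ) * (starRingEnd ℂ) (v x)) =
      ((r ^ 4 : ℝ) : ℂ) * (Complex.I * (‖v x‖ : ℂ) ^ 2 * deriv v x * (starRingEnd ℂ) (v x)) := by
    push_cast; ring
  simp only [Pfun, deriv_const_mul_field, norm_mul, Complex.ofReal_mul, mul_pow,
    Complex.norm_real, Real.norm_eq_abs, hr, map_mul, Complex.conj_ofReal, h, integral_const_mul,
    Complex.re_ofReal_mul]

theorem integral_norm_pow_six_smul (r : ℝ) (v : ℝ → ℂ) :
    ∫ x : ℝ, ‖(r : ℂ) * v x‖ ^ 6 = r ^ 6 * ∫ x : ℝ, ‖v x‖ ^ 6 := by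
  have hr : |r| ^ 6 = r ^ 6 := Even.pow_abs (by decide) r
  simp only [norm_mul, mul_pow, Complex.norm_real, Real.norm_eq_abs, hr, integral_const_mul]

theorem stmt13 (b : ℝ) (hb : 0 < b) (ω₀ ω₁ : ℝ) (hΩ : ω₁ ^ 2 < 4 * ω₀)
    (v : ℝ → ℂ) (hv : H1 v) (hK : Kfun b ω₀ ω₁ v < 0) :
    sInf {s : ℝ | ∃ w : ℝ → ℂ, H1 w ∧ w ≠ 0 ∧ Kfun b ω₀ ω₁ w = 0 ∧ s = Sfun b ω₀ ω₁ w} <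
      (1 / 4) * Lfun ω₀ ω₁ v + (b / 12) * ∫ x : ℝ, ‖v x‖ ^ 6 := by
  have hv0 : v ≠ 0 := by
    rintro rfl
    simp [Kfun, Lfun, Pfun] at hK
  have hL := Lfun_pos hΩ hv hv0
  have hN := integral_norm_pow_six_nonneg v
  -- With `t = r ^ 2`, one has `K_ω (r v) = t * f t` for the quadratic `f` below.
  obtain ⟨t, ⟨ht0, ht1⟩, ht⟩ : ∃ t ∈ Set.Ioo (0 : ℝ) 1,
      Lfun ω₀ ω₁ v - t * Pfun v - t ^ 2 * (b * ∫ x : ℝ, ‖v x‖ ^ 6) = 0 := by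
    have hf : ContinuousOn (fun t : ℝ =>
        Lfun ω₀ ω₁ v - t * Pfun v - t ^ 2 * (b * ∫ x : ℝ, ‖v x‖ ^ 6)) (Set.Icc 0 1) := by
      fun_prop
    refine intermediate_value_Ioo' zero_le_one hf ⟨?_, ?_⟩
    · simpa [Kfun] using hK
    · simpa using hL
  have hr2 : √t ^ 2 = t := Real.sq_sqrt ht0.le
  have hr4 : √t ^ 4 = t ^ 2 := by rw [show 4 = 2 * 2 from rfl, pow_mul, hr2]
  have hr6 : √t ^ 6 = t ^ 3 := by rw [show 6 = 2 * 3 from rfl, pow_mul, hr2]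
  have hbdd : BddBelow {s : ℝ | ∃ w : ℝ → ℂ, H1 w ∧ w ≠ 0 ∧ Kfun b ω₀ ω₁ w = 0 ∧
      s = Sfun b ω₀ ω₁ w} := by
    refine ⟨0, ?_⟩
    rintro s ⟨w, hw, hw0, hKw, rfl⟩
    have hLw := Lfun_pos hΩ hw hw0
    have hNw := mul_nonneg hb.le (integral_norm_pow_six_nonneg w)
    -- On the constraint `K_ω = 0`, the action equals `L_ω / 4 + (b / 12) ∫ |w|⁶`.
    unfold Kfun at hKw
    unfold Sfun
    linarith
  refine (csInf_le hbdd
    ⟨fun x => ((√t : ℝ) : ℂ) * v x, H1_smul _ hv, ?_, ?_, rfl⟩).trans_lt ?_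
  · obtain ⟨x, hx⟩ := Function.ne_iff.mp hv0
    refine Function.ne_iff.mpr ⟨x, mul_ne_zero ?_ hx⟩
    exact_mod_cast (Real.sqrt_pos.mpr ht0).ne'
  · rw [Kfun, Lfun_smul, Pfun_smul, integral_norm_pow_six_smul, hr2, hr4, hr6]
    linear_combination t * ht
  · rw [Sfun, Lfun_smul, Pfun_smul, integral_norm_pow_six_smul, hr2, hr4, hr6]
    have hLt : t * Lfun ω₀ ω₁ v < Lfun ω₀ ω₁ v := mul_lt_of_lt_one_left hL ht1
    have hNt : t ^ 3 * (b * ∫ x : ℝ, ‖v x‖ ^ 6) ≤ b * ∫ x : ℝ, ‖v x‖ ^ 6 :=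
      mul_le_of_le_one_left (mul_nonneg hb.le hN) (pow_le_one₀ ht0.le ht1.le)
    have hKt : t * Lfun ω₀ ω₁ v - t ^ 2 * Pfun v - t ^ 3 * (b * ∫ x : ℝ, ‖v x‖ ^ 6) = 0 := by
      linear_combination t * ht
    linarith

end
end
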